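/- arXiv:1104.0237 — 7 statements merged into one kernel-verified Lean document; each statement's English description precedes it below -/
import Mathlib

section
/- Let (X, Σ, ν) be a probability space, T : X → X a measure-preserving transformation, and f ∈ L¹(X, ν). Then: (1) there exists a function f̂ ∈ L¹(X, ν) such that the ergodic averages A_k(f,T,x) = (1/k)·Σ_{i=0}^{k-1} f(Tⁱx) converge to f̂(x) for ν-almost every x ∈ X as k → ∞; (2) f̂ is T-invariant, i.e. f̂(Tx) = f̂(x) for ν-almost every x; and (3) ∫_X f dν = ∫_X f̂ dν. -/
open MeasureTheory Filter Topology

/-!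
The limit is the conditional expectation `μ[f | invariants T]`. Since it is `T`-invariant, the
Birkhoff sums of `g = f - (μ[f | invariants T] + ε)` are bounded above at `x` exactly when they are
at `T x`, so the points where they are unbounded form an invariant set `A`. If `A` had positive
measure, the maximal ergodic theorem would give `∫ g ≥ 0` over an invariant part of `A` of finite
positive measure, whereas the choice of `g` makes this integral negative. Hence the averages of `f`
are eventually below every number larger than `μ[f | invariants T]`; applying this to `-f` bounds
them from below.
-/

open MeasurableSpace (invariants invariants_le)

/-- The running maximum `max (0 ≤ k ≤ n) (birkhoffSum T g k)` of the Birkhoff sums of `g`, to which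
the maximal ergodic theorem applies. It is nonnegative because `k = 0` is included. -/
def birkhoffMax {X M : Type*} [AddCommMonoid M] [SemilatticeSup M] (T : X → X) (g : X → M) :
    ℕ →o X → M :=
  partialSups (birkhoffSum T g)

section Order

variable {X M : Type*} {T : X → X} {g : X → M}

theorem birkhoffSum_le_birkhoffMax [AddCommMonoid M] [SemilatticeSup M] {k n : ℕ} (hkn : k ≤ n)
    (x : X) : birkhoffSum T g k x ≤ birkhoffMax T g n x :=
  le_partialSups_of_le (birkhoffSum T g) hkn x

theorem birkhoffMax_nonneg [AddCommMonoid M] [SemilatticeSup M] (n : ℕ) (x : X) :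
    0 ≤ birkhoffMax T g n x :=
  birkhoffSum_le_birkhoffMax n.zero_le x

theorem exists_birkhoffMax_eq_birkhoffSum [AddCommMonoid M] [LinearOrder M] (n : ℕ) (x : X) :
    ∃ k ≤ n, birkhoffMax T g n x = birkhoffSum T g k x := by
  simpa only [birkhoffMax, Pi.partialSups_apply] using exists_partialSups_eq (birkhoffSum T g · x) n

theorem birkhoffMax_pos_iff [AddCommMonoid M] [LinearOrder M] {n : ℕ} {x : X} :
    0 < birkhoffMax T g n x ↔ ∃ k ≤ n, 0 < birkhoffSum T g k x := by
  refine ⟨fun hpos => ?_, fun ⟨k, hkn, hk⟩ => hk.trans_le (birkhoffSum_le_birkhoffMax hkn x)⟩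
  obtain ⟨k, hkn, hk⟩ := exists_birkhoffMax_eq_birkhoffSum (T := T) (g := g) n x
  exact ⟨k, hkn, hk ▸ hpos⟩

theorem birkhoffMax_le_add_birkhoffMax_apply [AddCommMonoid M] [LinearOrder M]
    [IsOrderedAddMonoid M] {n : ℕ} {x : X} (hpos : 0 < birkhoffMax T g n x) :
    birkhoffMax T g n x ≤ g x + birkhoffMax T g n (T x) := by
  obtain ⟨k, hkn, hk⟩ := exists_birkhoffMax_eq_birkhoffSum (T := T) (g := g) n x
  rw [hk] at hpos ⊢
  cases k with
  | zero => exact absurd hpos (lt_irrefl 0)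
  | succ k =>
    rw [birkhoffSum_succ']
    gcongr
    exact birkhoffSum_le_birkhoffMax (k.le_succ.trans hkn) (T x)

theorem bddAbove_range_birkhoffSum_apply_iff [AddCommGroup M] [LinearOrder M]
    [IsOrderedAddMonoid M] (x : X) :
    BddAbove (Set.range (birkhoffSum T g · (T x))) ↔
      BddAbove (Set.range (birkhoffSum T g · x)) := by
  have hshift : (birkhoffSum T g · x) ∘ Nat.succ =
      OrderIso.addLeft (g x) ∘ (birkhoffSum T g · (T x)) :=
    funext fun n => birkhoffSum_succ' T g n x
  rw [← Nat.range_of_succ (birkhoffSum T g · x), Set.singleton_union, bddAbove_insert, hshift,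
    Set.range_comp, OrderIso.bddAbove_image]

theorem eventually_birkhoffAverage_lt_of_bddAbove {φ f : X → ℝ} (hφ : φ ∘ T = φ) {x : X} {b : ℝ}
    (hbdd : BddAbove (Set.range (birkhoffSum T (f - φ) · x))) (hb : φ x < b) :
    ∀ᶠ n in atTop, birkhoffAverage ℝ T f n x < b := by
  obtain ⟨C, hC⟩ := hbdd
  filter_upwards [(tendsto_const_div_atTop_nhds_zero_nat C).eventually_lt_const (sub_pos.2 hb),
    eventually_gt_atTop 0] with n hn hn0
  have hn0 : (0 : ℝ) < n := Nat.cast_pos.2 hn0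
  have hsum : birkhoffSum T f n x - n * φ x ≤ C := by
    simpa [birkhoffSum_sub, birkhoffSum_of_comp_eq hφ] using hC ⟨n, rfl⟩
  calc birkhoffAverage ℝ T f n x = birkhoffSum T f n x / n := by
        rw [birkhoffAverage, smul_eq_mul, inv_mul_eq_div]
    _ ≤ (C + n * φ x) / n := div_le_div_of_nonneg_right (sub_le_iff_le_add.1 hsum) hn0.le
    _ = C / n + φ x := by rw [add_div, mul_div_cancel_left₀ _ hn0.ne']
    _ < b := lt_sub_iff_add_lt.1 hn

end Order

section Measurability

variable {X M : Type*} [MeasurableSpace X] {T : X → X}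

theorem measurable_birkhoffSum [AddCommMonoid M] [MeasurableSpace M] [MeasurableAdd₂ M] {g : X → M}
    (hT : Measurable T) (hg : Measurable g) (n : ℕ) : Measurable (birkhoffSum T g n) :=
  Finset.measurable_fun_sum _ fun k _ => hg.comp (hT.iterate k)

variable {μ : Measure X}

theorem integrable_birkhoffSum [NormedAddCommGroup M] {g : X → M} (hT : MeasurePreserving T μ μ)
    (hg : Integrable g μ) (n : ℕ) : Integrable (birkhoffSum T g n) μ :=
  integrable_finsetSum _ fun k _ => (hT.iterate k).integrable_comp_of_integrable hg

theorem integrable_birkhoffMax {g : X → ℝ} (hT : MeasurePreserving T μ μ) (hg : Integrable g μ)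
    (n : ℕ) : Integrable (birkhoffMax T g n) μ := by
  induction n with
  | zero => exact integrable_birkhoffSum hT hg 0
  | succ n ih =>
    rw [birkhoffMax, ← Order.succ_eq_add_one, partialSups_succ]
    exact ih.sup (integrable_birkhoffSum hT hg _)

end Measurability

section MaximalErgodic

variable {X : Type*} [MeasurableSpace X] {μ : Measure X} {T : X → X} {g : X → ℝ}

theorem setIntegral_birkhoffMax_pos_nonneg (hT : MeasurePreserving T μ μ) (hg : Integrable g μ)
    (n : ℕ) : 0 ≤ ∫ x in {x | 0 < birkhoffMax T g n x}, g x ∂μ := by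
  have hM := integrable_birkhoffMax hT hg n
  have hMT : Integrable (fun x => birkhoffMax T g n (T x)) μ :=
    hT.integrable_comp_of_integrable hM
  have hpos : NullMeasurableSet {x | 0 < birkhoffMax T g n x} μ :=
    nullMeasurableSet_lt aemeasurable_const hM.aemeasurable
  have hcomp : ∫ x, birkhoffMax T g n (T x) ∂μ = ∫ x, birkhoffMax T g n x ∂μ := by
    rw [← integral_map hT.aemeasurable (by rw [hT.map_eq]; exact hM.aestronglyMeasurable),
      hT.map_eq]
  calc 0 = ∫ x, (birkhoffMax T g n x - birkhoffMax T g n (T x)) ∂μ := by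
        rw [integral_sub hM hMT, hcomp, sub_self]
    _ ≤ ∫ x, Set.indicator {x | 0 < birkhoffMax T g n x} g x ∂μ := by
        refine integral_mono (hM.sub hMT) (hg.indicator₀ hpos) fun x => ?_
        by_cases hx : x ∈ {x | 0 < birkhoffMax T g n x}
        · rw [Set.indicator_of_mem hx]
          exact sub_le_iff_le_add.2 (birkhoffMax_le_add_birkhoffMax_apply hx)
        · rw [Set.indicator_of_notMem hx]
          exact sub_nonpos.2 ((not_lt.1 hx).trans (birkhoffMax_nonneg n (T x)))
    _ = ∫ x in {x | 0 < birkhoffMax T g n x}, g x ∂μ := integral_indicator₀ hpos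

theorem setIntegral_exists_birkhoffSum_pos_nonneg (hT : MeasurePreserving T μ μ)
    (hg : Integrable g μ) : 0 ≤ ∫ x in {x | ∃ n, 0 < birkhoffSum T g n x}, g x ∂μ := by
  have hunion : {x | ∃ n, 0 < birkhoffSum T g n x} = ⋃ n, {x | 0 < birkhoffMax T g n x} := by
    ext x
    simp only [Set.mem_ofPred_eq, Set.mem_iUnion, birkhoffMax_pos_iff]
    exact ⟨fun ⟨n, hn⟩ => ⟨n, n, le_rfl, hn⟩, fun ⟨_, k, _, hk⟩ => ⟨k, hk⟩⟩
  have hmono : Monotone fun n => {x | 0 < birkhoffMax T g n x} := fun _ _ hmn x hx =>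
    lt_of_lt_of_le hx ((birkhoffMax T g).monotone hmn x)
  rw [hunion]
  exact ge_of_tendsto' (tendsto_setIntegral_of_monotone₀
    (fun n => nullMeasurableSet_lt aemeasurable_const (integrable_birkhoffMax hT hg n).aemeasurable)
    hmono hg.integrableOn) (setIntegral_birkhoffMax_pos_nonneg hT hg)

theorem setIntegral_nonneg_of_exists_birkhoffSum_pos (hT : MeasurePreserving T μ μ) {s : Set X}
    (hs : MeasurableSet[invariants T] s) (hg : IntegrableOn g s μ)
    (hpos : ∀ x ∈ s, ∃ n, 0 < birkhoffSum T g n x) : 0 ≤ ∫ x in s, g x ∂μ := by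
  have hTs : MeasurePreserving T (μ.restrict s) (μ.restrict s) := by
    simpa only [hs.2] using hT.restrict_preimage hs.1
  have hae : ∀ᵐ x ∂μ.restrict s, x ∈ {x | ∃ n, 0 < birkhoffSum T g n x} :=
    (ae_restrict_mem hs.1).mono hpos
  simpa only [Measure.restrict_eq_self_of_ae_mem hae] using
    setIntegral_exists_birkhoffSum_pos_nonneg hTs hg

end MaximalErgodic

theorem condExp_invariants_comp_eq {X E : Type*} [MeasurableSpace X] [NormedAddCommGroup E]
    [NormedSpace ℝ E] [CompleteSpace E] (μ : Measure X) (T : X → X) (f : X → E) :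
    μ[f | invariants T] ∘ T = μ[f | invariants T] := by
  borelize E
  exact MeasurableSpace.comp_eq_of_measurable_invariants stronglyMeasurable_condExp.measurable

section Pointwise

variable {X : Type*} [MeasurableSpace X] {μ : Measure X} {T : X → X}
  [SigmaFinite (μ.trim (invariants_le T))]

theorem ae_bddAbove_range_birkhoffSum {g : X → ℝ} (hT : MeasurePreserving T μ μ)
    (hg : Measurable g)
    (hneg : ∀ s, MeasurableSet[invariants T] s → 0 < μ s → μ s < ⊤ → ∫ x in s, g x ∂μ < 0) :
    ∀ᵐ x ∂μ, BddAbove (Set.range (birkhoffSum T g · x)) := by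
  set A : Set X := {x | ¬ BddAbove (Set.range (birkhoffSum T g · x))}
  have hA : MeasurableSet[invariants T] A :=
    ⟨(measurableSet_bddAbove_range (measurable_birkhoffSum hT.measurable hg)).compl,
      Set.ext fun x => not_congr (bddAbove_range_birkhoffSum_apply_iff x)⟩
  change μ A = 0
  by_contra hμA
  rw [← trim_measurableSet_eq (invariants_le T) hA, ← ne_eq, ← pos_iff_ne_zero] at hμA
  obtain ⟨s, hs, hsA, hs_pos, hs_lt_top⟩ := Measure.exists_subset_measure_lt_top hA hμA
  rw [trim_measurableSet_eq _ hs] at hs_pos hs_lt_top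
  have hs_neg := hneg s hs hs_pos hs_lt_top
  -- a nonintegrable function has integral `0` by convention
  have hgs : IntegrableOn g s μ := .of_integral_ne_zero hs_neg.ne
  refine hs_neg.not_ge (setIntegral_nonneg_of_exists_birkhoffSum_pos hT hs hgs fun x hx => ?_)
  obtain ⟨_, ⟨n, rfl⟩, hn⟩ := not_bddAbove_iff.1 (hsA hx) 0
  exact ⟨n, hn⟩

variable {f : X → ℝ}

theorem ae_bddAbove_range_birkhoffSum_sub_condExp_add (hT : MeasurePreserving T μ μ)
    (hfm : Measurable f) (hf : Integrable f μ) {ε : ℝ} (hε : 0 < ε) :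
    ∀ᵐ x ∂μ, BddAbove (Set.range
      (birkhoffSum T (f - fun y => (μ[f | invariants T]) y + ε) · x)) := by
  refine ae_bddAbove_range_birkhoffSum hT
    (hfm.sub ((stronglyMeasurable_condExp.mono (invariants_le T)).measurable.add_const ε))
    fun s hs hs_pos hs_lt_top => ?_
  have hE : IntegrableOn (μ[f | invariants T]) s μ := integrable_condExp.integrableOn
  have hconst : IntegrableOn (fun _ => ε) s μ := integrableOn_const hs_lt_top.ne
  have hadd : IntegrableOn (fun x => (μ[f | invariants T]) x + ε) s μ := hE.add hconst
  calc ∫ x in s, (f x - ((μ[f | invariants T]) x + ε)) ∂μ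
      = ∫ x in s, f x ∂μ - (∫ x in s, (μ[f | invariants T]) x ∂μ + μ.real s * ε) := by
        rw [integral_sub hf.integrableOn hadd, integral_add hE hconst, setIntegral_const,
          smul_eq_mul]
    _ = -(μ.real s * ε) := by rw [setIntegral_condExp (invariants_le T) hf hs]; ring
    _ < 0 := neg_neg_of_pos (mul_pos (ENNReal.toReal_pos hs_pos.ne' hs_lt_top.ne) hε)

theorem ae_forall_condExp_lt_eventually_birkhoffAverage_lt (hT : MeasurePreserving T μ μ)
    (hfm : Measurable f) (hf : Integrable f μ) :
    ∀ᵐ x ∂μ, ∀ b, (μ[f | invariants T]) x < b →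
      ∀ᶠ n in atTop, birkhoffAverage ℝ T f n x < b := by
  have hbdd := ae_all_iff.2 fun m : ℕ =>
    ae_bddAbove_range_birkhoffSum_sub_condExp_add hT hfm hf (Nat.one_div_pos_of_nat (n := m))
  filter_upwards [hbdd] with x hx b hb
  obtain ⟨m, hm⟩ := exists_nat_one_div_lt (sub_pos.2 hb)
  have hinv : (fun y => (μ[f | invariants T]) y + 1 / ((m : ℝ) + 1)) ∘ T =
      fun y => (μ[f | invariants T]) y + 1 / ((m : ℝ) + 1) :=
    congrArg (fun φ y => φ y + 1 / ((m : ℝ) + 1)) (condExp_invariants_comp_eq μ T f)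
  exact eventually_birkhoffAverage_lt_of_bddAbove hinv (hx m) (lt_sub_iff_add_lt'.1 hm)

theorem ae_tendsto_birkhoffAverage_condExp_of_measurable (hT : MeasurePreserving T μ μ)
    (hfm : Measurable f) (hf : Integrable f μ) :
    ∀ᵐ x ∂μ, Tendsto (birkhoffAverage ℝ T f · x) atTop (𝓝 ((μ[f | invariants T]) x)) := by
  filter_upwards [ae_forall_condExp_lt_eventually_birkhoffAverage_lt hT hfm hf,
    ae_forall_condExp_lt_eventually_birkhoffAverage_lt hT hfm.neg hf.neg,
    condExp_neg f (invariants T)] with x hupper hlower hneg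
  refine tendsto_order.2 ⟨fun b hb => ?_, hupper⟩
  simpa only [birkhoffAverage_neg, Pi.neg_apply, neg_lt_neg_iff] using
    hlower (-b) (by simpa only [hneg, Pi.neg_apply, neg_lt_neg_iff])

theorem ae_tendsto_birkhoffAverage_condExp (hT : MeasurePreserving T μ μ) (hf : Integrable f μ) :
    ∀ᵐ x ∂μ, Tendsto (birkhoffAverage ℝ T f · x) atTop (𝓝 ((μ[f | invariants T]) x)) := by
  have hmk : f =ᵐ[μ] hf.1.mk f := hf.1.ae_eq_mk
  filter_upwards [ae_tendsto_birkhoffAverage_condExp_of_measurable hT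
      hf.1.stronglyMeasurable_mk.measurable (hf.congr hmk),
    condExp_congr_ae (m := invariants T) hmk,
    ae_all_iff.2 (hT.quasiMeasurePreserving.birkhoffAverage_ae_eq_of_ae_eq ℝ hmk)]
    with x htendsto hcondExp haverage
  simpa only [hcondExp, haverage] using htendsto

end Pointwise

theorem birkhoff_ergodic_theorem_general
    {X : Type*} [MeasurableSpace X] (μ : Measure X) (T : X → X)
    [SigmaFinite (μ.trim (invariants_le T))] (hT : MeasurePreserving T μ μ)
    (f : X → ℝ) (hf : Integrable f μ) :
    ∃ fhat : X → ℝ, Integrable fhat μ ∧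
      (∀ᵐ x ∂μ, Tendsto (fun k : ℕ => (1 / (k : ℝ)) * ∑ i ∈ Finset.range k, f (T^[i] x))
        atTop (𝓝 (fhat x))) ∧
      (∀ᵐ x ∂μ, fhat (T x) = fhat x) ∧
      ∫ x, f x ∂μ = ∫ x, fhat x ∂μ := by
  refine ⟨μ[f | invariants T], integrable_condExp, ?_,
    ae_of_all _ (congrFun (condExp_invariants_comp_eq μ T f)),
    (integral_condExp (invariants_le T)).symm⟩
  simpa only [birkhoffAverage, birkhoffSum, smul_eq_mul, one_div] using
    ae_tendsto_birkhoffAverage_condExp hT hf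

/-- **Birkhoff Ergodic Theorem.** For a probability space `(X, ν)`, a measure-preserving
transformation `T : X → X`, and an integrable function `f`, the ergodic averages
`A_k(f,T,x) = (1/k)·∑_{i<k} f(Tⁱx)` converge ν-a.e. to an integrable, a.e. `T`-invariant
function `f̂` with the same integral as `f`. -/
theorem birkhoff_ergodic_theorem
    {X : Type*} [MeasurableSpace X] (ν : Measure X) [IsProbabilityMeasure ν]
    (T : X → X) (hT : MeasurePreserving T ν ν)
    (f : X → ℝ) (hf : Integrable f ν) :
    ∃ fhat : X → ℝ, Integrable fhat ν ∧
      (∀ᵐ x ∂ν, Tendsto (fun k : ℕ => (1 / (k : ℝ)) * ∑ i ∈ Finset.range k, f (T^[i] x))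
        atTop (𝓝 (fhat x))) ∧
      (∀ᵐ x ∂ν, fhat (T x) = fhat x) ∧
      ∫ x, f x ∂ν = ∫ x, fhat x ∂ν :=
  birkhoff_ergodic_theorem_general ν T hT f hf
end

section
/- Let Y be a finite set of cardinality M ≥ 1 and let T : Y → Y be a transitive permutation (a single cycle of length M, i.e. some (equivalently, every) point of Y has T-orbit equal to all of Y). Let F : Y → ℝ and set Av(F) = (1/M)·Σ_{y ∈ Y} F(y) and Av(|F|) = (1/M)·Σ_{y ∈ Y} |F(y)|. Then for every K ≥ 1 and every x ∈ Y, |(1/K)·Σ_{i=0}^{K-1} F(Tⁱx) − Av(F)| ≤ (2M/K)·Av(|F|). -/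
open Filter

/-! Let `p` be the length of the cycle, `S` the sum of `F` over it, and write `K = q p + r` with
`r < p`. The first `q p` steps of the orbit sweep the cycle exactly `q` times and contribute `q S`,
so the sum of `F` along `K` steps differs from `(K / p) S` by `R - (r / p) S`, where `R` is the sum
of `F` over the last `r` steps. These visit distinct points, so the difference is a combination of
the values of `F` on the cycle with coefficients `1 - r / p` and `-r / p`, all in `[-1, 1]`.
Hence its norm is at most `∑ ‖F‖`, which is better than the claimed bound by a factor of two. -/

section Birkhoff

variable {α M : Type*} [AddCommMonoid M] {T : α → α} {p : ℕ} {x : α}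

theorem birkhoffSum_mul_of_isPeriodicPt (hx : Function.IsPeriodicPt T p x) (F : α → M) (q : ℕ) :
    birkhoffSum T F (q * p) x = q • birkhoffSum T F p x := by
  induction q with
  | zero => rw [zero_mul, birkhoffSum_zero, zero_nsmul]
  | succ q ih => rw [Nat.succ_mul, birkhoffSum_add, ih, (hx.const_mul q).eq, succ_nsmul]

theorem birkhoffSum_eq_div_nsmul_add_birkhoffSum_mod (hx : Function.IsPeriodicPt T p x)
    (F : α → M) (K : ℕ) :
    birkhoffSum T F K x = (K / p) • birkhoffSum T F p x + birkhoffSum T F (K % p) x := by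
  conv_lhs => rw [← Nat.div_add_mod' K p]
  rw [birkhoffSum_add, birkhoffSum_mul_of_isPeriodicPt hx, (hx.const_mul (K / p)).eq]

theorem birkhoffSum_card_of_isCycleOn {σ : Equiv.Perm α} {s : Finset α} (hσ : σ.IsCycleOn s)
    (hx : x ∈ s) (F : α → M) : birkhoffSum σ F s.card x = ∑ y ∈ s, F y := by
  refine Finset.sum_nbij (fun i => σ^[i] x) ?mapsTo ?injOn ?surjOn fun _ _ => rfl
  case mapsTo => exact fun i _ => hσ.1.mapsTo.iterate i hx
  case injOn =>
    intro i hi j hj hij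
    have hmod : i ≡ j [MOD s.card] := (hσ.pow_apply_eq_pow_apply hx).1 <| by
      simpa only [Equiv.Perm.coe_pow] using hij
    exact hmod.eq_of_lt_of_lt (Finset.mem_range.1 hi) (Finset.mem_range.1 hj)
  case surjOn =>
    intro y hy
    obtain ⟨i, hi, hiy⟩ := hσ.exists_pow_eq hx hy
    exact ⟨i, Finset.mem_range.2 hi, by rwa [Equiv.Perm.coe_pow] at hiy⟩

end Birkhoff

section Discrepancy

variable {α E : Type*} [SeminormedAddCommGroup E] [NormedSpace ℝ E]

theorem norm_sub_smul_add_le (a b : E) {t : ℝ} (ht₀ : 0 ≤ t) (ht₁ : t ≤ 1) :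
    ‖a - t • (a + b)‖ ≤ ‖a‖ + ‖b‖ :=
  calc ‖a - t • (a + b)‖ = ‖(1 - t) • a - t • b‖ := by congr 1; module
    _ ≤ ‖(1 - t) • a‖ + ‖t • b‖ := norm_sub_le _ _
    _ = (1 - t) * ‖a‖ + t * ‖b‖ := by
      rw [norm_smul_of_nonneg (sub_nonneg.2 ht₁), norm_smul_of_nonneg ht₀]
    _ ≤ ‖a‖ + ‖b‖ :=
      add_le_add (mul_le_of_le_one_left (norm_nonneg a) (sub_le_self 1 ht₀))
        (mul_le_of_le_one_left (norm_nonneg b) ht₁)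

theorem norm_sum_sub_smul_sum_le_of_subset {s u : Finset α} (hsu : s ⊆ u) (f : α → E) {t : ℝ}
    (ht₀ : 0 ≤ t) (ht₁ : t ≤ 1) :
    ‖∑ i ∈ s, f i - t • ∑ i ∈ u, f i‖ ≤ ∑ i ∈ u, ‖f i‖ := by
  classical
  rw [← Finset.sum_sdiff hsu, ← Finset.sum_sdiff hsu, add_comm, add_comm (∑ i ∈ u \ s, ‖f i‖)]
  exact (norm_sub_smul_add_le _ _ ht₀ ht₁).trans <|
    add_le_add (norm_sum_le _ _) (norm_sum_le _ _)

theorem norm_birkhoffSum_sub_smul_le_of_isPeriodicPt {T : α → α} {p : ℕ} {x : α} (hp : 0 < p)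
    (hx : Function.IsPeriodicPt T p x) (F : α → E) (K : ℕ) :
    ‖birkhoffSum T F K x - (K / p : ℝ) • birkhoffSum T F p x‖ ≤
      birkhoffSum T (fun y => ‖F y‖) p x := by
  have hmod : K % p < p := Nat.mod_lt K hp
  have hdiv : (K / p : ℝ) = (K / p : ℕ) + (K % p : ℕ) / (p : ℝ) := by
    have hp' : (p : ℝ) ≠ 0 := Nat.cast_ne_zero.2 hp.ne'
    rw [div_eq_iff hp', add_mul, div_mul_cancel₀ _ hp']
    exact_mod_cast (Nat.div_add_mod' K p).symm
  have hremainder : birkhoffSum T F K x - (K / p : ℝ) • birkhoffSum T F p x =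
      birkhoffSum T F (K % p) x - ((K % p : ℕ) / (p : ℝ)) • birkhoffSum T F p x := by
    rw [birkhoffSum_eq_div_nsmul_add_birkhoffSum_mod hx F K, hdiv, add_smul,
      Nat.cast_smul_eq_nsmul, add_sub_add_left_eq_sub]
  rw [hremainder]
  exact norm_sum_sub_smul_sum_le_of_subset (Finset.range_mono hmod.le) (fun i => F (T^[i] x))
    (by positivity) (div_le_one_of_le₀ (Nat.cast_le.2 hmod.le) p.cast_nonneg)

theorem transitive_average_bound_general {σ : Equiv.Perm α} {s : Finset α} (hσ : σ.IsCycleOn s)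
    (F : α → E) {K : ℕ} (hK : K ≠ 0) {x : α} (hx : x ∈ s) :
    ‖birkhoffAverage ℝ σ F K x - (s.card : ℝ)⁻¹ • ∑ y ∈ s, F y‖ ≤
      (K : ℝ)⁻¹ * ∑ y ∈ s, ‖F y‖ := by
  have hs : 0 < s.card := Finset.card_pos.2 ⟨x, hx⟩
  have hperiodic : Function.IsPeriodicPt σ s.card x := by
    rw [Function.IsPeriodicPt, Function.IsFixedPt, ← Equiv.Perm.coe_pow, hσ.pow_card_apply hx]
  have hsum : ‖birkhoffSum σ F K x - (K / s.card : ℝ) • ∑ y ∈ s, F y‖ ≤ ∑ y ∈ s, ‖F y‖ := by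
    simpa only [birkhoffSum_card_of_isCycleOn hσ hx] using
      norm_birkhoffSum_sub_smul_le_of_isPeriodicPt hs hperiodic F K
  have hscale : birkhoffAverage ℝ σ F K x - (s.card : ℝ)⁻¹ • ∑ y ∈ s, F y =
      (K : ℝ)⁻¹ • (birkhoffSum σ F K x - (K / s.card : ℝ) • ∑ y ∈ s, F y) := by
    rw [birkhoffAverage, smul_sub, smul_smul, div_eq_mul_inv,
      inv_mul_cancel_left₀ (Nat.cast_ne_zero.2 hK)]
  rw [hscale, norm_smul_of_nonneg (by positivity)]
  gcongr

end Discrepancy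

theorem isCycleOn_univ_of_forall_exists_iterate_eq {α : Type*} {σ : Equiv.Perm α} {x : α}
    (hx : ∀ y, ∃ i : ℕ, σ^[i] x = y) : σ.IsCycleOn Set.univ := by
  have hsame (y : α) : σ.SameCycle x y := by
    obtain ⟨i, rfl⟩ := hx y
    exact ⟨i, by rw [zpow_natCast, Equiv.Perm.coe_pow]⟩
  exact ⟨Set.bijOn_univ.2 σ.bijective, fun y _ z _ => (hsame y).symm.trans (hsame z)⟩

/-- For a transitive permutation `T` (a single cycle of length `M = |Y|`) of a finite set
`Y` and any `F : Y → ℝ`, the ergodic average of length `K ≥ 1` starting at any `x` differs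
from the full average `Av(F) = (1/M)·∑ F` by at most `(2M/K)·Av(|F|)`. -/
theorem transitive_average_bound
    {Y : Type*} [Fintype Y] (T : Y → Y) (hT : Function.Bijective T)
    (M : ℕ) (hM : M = Fintype.card Y) (hM1 : 1 ≤ M)
    (htrans : ∃ x : Y, ∀ y : Y, ∃ i : ℕ, T^[i] x = y)
    (F : Y → ℝ) :
    ∀ K : ℕ, 1 ≤ K → ∀ x : Y,
      |(1 / (K : ℝ)) * ∑ i ∈ Finset.range K, F (T^[i] x) -
          (1 / (M : ℝ)) * ∑ y : Y, F y|
        ≤ (2 * (M : ℝ) / (K : ℝ)) * ((1 / (M : ℝ)) * ∑ y : Y, |F y|) := by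
  intro K hK x
  subst hM
  obtain ⟨x₀, hx₀⟩ := htrans
  let σ : Equiv.Perm Y := Equiv.ofBijective T hT
  have hσ : σ.IsCycleOn (Finset.univ : Finset Y) := by
    simpa only [Finset.coe_univ] using isCycleOn_univ_of_forall_exists_iterate_eq (σ := σ) hx₀
  have hM0 : (Fintype.card Y : ℝ) ≠ 0 := Nat.cast_ne_zero.2 (Nat.one_le_iff_ne_zero.1 hM1)
  calc |(1 / (K : ℝ)) * ∑ i ∈ Finset.range K, F (T^[i] x) - (1 / (Fintype.card Y : ℝ)) * ∑ y, F y|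
      ≤ (1 / (K : ℝ)) * ∑ y, |F y| := by
        rw [one_div, one_div]
        exact transitive_average_bound_general hσ F (Nat.one_le_iff_ne_zero.1 hK)
          (Finset.mem_univ x)
    _ ≤ 2 * ((1 / (K : ℝ)) * ∑ y, |F y|) := le_mul_of_one_le_left (by positivity) one_le_two
    _ = (2 * (Fintype.card Y : ℝ) / K) * ((1 / (Fintype.card Y : ℝ)) * ∑ y, |F y|) := by
        field_simp
end

section
/- Let Y_n be a sequence of finite nonempty sets with |Y_n| = M_n → ∞, let T_n : Y_n → Y_n be permutations, and let F_n : Y_n → ℝ be a uniformly integrable sequence. Let K_n and L_n be sequences of positive natural numbers such that K_n/M_n is bounded, liminf_{n→∞} K_n/M_n > 0, and lim_{n→∞} K_n/L_n = 1. If, in addition, every T_n is a transitive permutation (a single cycle of length M_n), or the functions F_n are uniformly bounded (sup_n max_{y ∈ Y_n} |F_n(y)| < ∞), then lim_{n→∞} max_{y ∈ Y_n} |A_{K_n}(F_n,T_n,y) − A_{L_n}(F_n,T_n,y)| = 0. -/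
open Filter Topology

/-- The ergodic average `A_K(F,T,y) = (1/K)·∑_{i<K} F(Tⁱy)`. -/
noncomputable def ergAvg {Y : Type*} (T : Y → Y) (F : Y → ℝ) (K : ℕ) (y : Y) : ℝ :=
  (1 / (K : ℝ)) * ∑ i ∈ Finset.range K, F (T^[i] y)

/-!
Split `F` into its restriction to `{‖F‖ ≤ k}` and the remaining large part. Passing from length `K`
to length `L` moves the ergodic average of a function bounded by `k` by at most `2k|K/L - 1|`. The
large part contributes little as soon as its averages of length `K` are uniformly small over all
starting points, and such smallness passes to any length of at least comparable order, by covering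
a long orbit segment with short ones. Along a single cycle, the averages of length `|Y|` are
the mean over `Y`, so there it is uniform integrability that makes them small; for uniformly
bounded functions the large part vanishes.
-/

open Asymptotics Function

lemma ergAvg_eq_birkhoffAverage {Y : Type*} (T : Y → Y) (F : Y → ℝ) :
    ergAvg T F = birkhoffAverage ℝ T F := by
  funext K y
  rw [ergAvg, birkhoffAverage, birkhoffSum, one_div, smul_eq_mul]

section BirkhoffSum

variable {α M : Type*}

lemma isCycleOn_univ_of_exists_forall_iterate_eq {σ : Equiv.Perm α}
    (h : ∃ x, ∀ y, ∃ i : ℕ, σ^[i] x = y) : σ.IsCycleOn Set.univ := by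
  obtain ⟨x, hx⟩ := h
  have hxy (y : α) : σ.SameCycle x y := by
    obtain ⟨i, rfl⟩ := hx y
    exact ⟨i, by rw [zpow_natCast, Equiv.Perm.coe_pow]⟩
  exact ⟨σ.bijective.bijOn_univ, fun y _ z _ ↦ (hxy y).symm.trans (hxy z)⟩

lemma birkhoffSum_card_of_isCycleOn_univ [Fintype α] [AddCommMonoid M] {σ : Equiv.Perm α}
    (hσ : σ.IsCycleOn Set.univ) (g : α → M) (x : α) :
    birkhoffSum σ g (Fintype.card α) x = ∑ y, g y := by
  rw [← Finset.coe_univ] at hσ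
  have hsurj : Surjective fun i : Fin (Fintype.card α) ↦ σ^[i] x := fun y ↦ by
    obtain ⟨i, hi, rfl⟩ := hσ.exists_pow_eq (Finset.mem_univ x) (Finset.mem_univ y)
    exact ⟨⟨i, hi⟩, by rw [Equiv.Perm.coe_pow]⟩
  have hbij := (Fintype.bijective_iff_surjective_and_card _).2 ⟨hsurj, Fintype.card_fin _⟩
  rw [birkhoffSum, ← Fin.sum_univ_eq_sum_range fun i ↦ g (σ^[i] x)]
  exact hbij.sum_comp g

variable {f : α → α} {g : α → ℝ}

lemma birkhoffSum_mono_of_nonneg (hg : ∀ x, 0 ≤ g x) (x : α) :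
    Monotone fun n ↦ birkhoffSum f g n x := fun _ _ hmn ↦
  Finset.sum_le_sum_of_subset_of_nonneg (Finset.range_mono hmn) fun _ _ _ ↦ hg _

lemma birkhoffSum_mul_le {p : ℕ} {c : ℝ} (h : ∀ x, birkhoffSum f g p x ≤ c) (q : ℕ) (x : α) :
    birkhoffSum f g (q * p) x ≤ q * c := by
  induction q generalizing x with
  | zero => simp
  | succ q ih =>
    rw [Nat.succ_mul, birkhoffSum_add, Nat.cast_succ, add_one_mul]
    exact add_le_add (ih x) (h _)

lemma birkhoffAverage_le_of_forall_birkhoffAverage_le (hg : ∀ x, 0 ≤ g x) {p : ℕ} (hp : p ≠ 0)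
    {ε : ℝ} (h : ∀ x, birkhoffAverage ℝ f g p x ≤ ε) (n : ℕ) (x : α) :
    birkhoffAverage ℝ f g n x ≤ (1 + p / n) * ε := by
  have hp0 : (0 : ℝ) < p := by positivity
  have hsum (z : α) : birkhoffSum f g p z ≤ p * ε := (inv_mul_le_iff₀ hp0).1 (h z)
  have hε : 0 ≤ ε :=
    (mul_nonneg (by positivity) (Finset.sum_nonneg fun _ _ ↦ hg _)).trans (h x)
  rcases n.eq_zero_or_pos with rfl | hn
  · simpa using hε
  have hcover : n ≤ (n / p + 1) * p := (Nat.lt_div_mul_add hp.bot_lt).le.trans_eq (by ring)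
  refine (inv_mul_le_iff₀ (by positivity)).2 ?_
  calc birkhoffSum f g n x
      ≤ birkhoffSum f g ((n / p + 1) * p) x := birkhoffSum_mono_of_nonneg hg x hcover
    _ ≤ ((n / p + 1 : ℕ) : ℝ) * (p * ε) := birkhoffSum_mul_le hsum _ x
    _ ≤ ((n : ℝ) / p + 1) * (p * ε) := by
        rw [Nat.cast_succ]
        gcongr
        exact Nat.cast_div_le
    _ = n * ((1 + p / n) * ε) := by field_simp

end BirkhoffSum

section NormedSpace

variable {α E : Type*} [SeminormedAddCommGroup E] {f : α → α} {g : α → E} {C : ℝ}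

lemma norm_birkhoffSum_le (hg : ∀ x, ‖g x‖ ≤ C) (n : ℕ) (x : α) :
    ‖birkhoffSum f g n x‖ ≤ n * C := by
  simpa [birkhoffSum] using norm_sum_le_of_le (Finset.range n) fun i _ ↦ hg (f^[i] x)

lemma norm_birkhoffSum_sub_birkhoffSum_le (hg : ∀ x, ‖g x‖ ≤ C) (a b : ℕ) (x : α) :
    ‖birkhoffSum f g a x - birkhoffSum f g b x‖ ≤ |(a : ℝ) - b| * C := by
  wlog hab : a ≤ b generalizing a b
  · rw [norm_sub_rev, abs_sub_comm]
    exact this b a (le_of_not_ge hab)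
  obtain ⟨d, rfl⟩ := Nat.exists_eq_add_of_le hab
  rw [birkhoffSum_add]
  simpa using norm_birkhoffSum_le hg d (f^[a] x)

variable [NormedSpace ℝ E]

lemma norm_birkhoffAverage_le_birkhoffAverage_norm (f : α → α) (g : α → E) (n : ℕ) (x : α) :
    ‖birkhoffAverage ℝ f g n x‖ ≤ birkhoffAverage ℝ f (fun y ↦ ‖g y‖) n x := by
  rw [birkhoffAverage, birkhoffAverage, norm_smul, norm_inv, Real.norm_natCast, smul_eq_mul]
  gcongr
  exact norm_sum_le _ _

lemma norm_birkhoffAverage_sub_birkhoffAverage_le (hg : ∀ x, ‖g x‖ ≤ C) (a : ℕ) {b : ℕ}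
    (hb : b ≠ 0) (x : α) :
    ‖birkhoffAverage ℝ f g a x - birkhoffAverage ℝ f g b x‖ ≤ 2 * C * |(a : ℝ) / b - 1| := by
  have hC : 0 ≤ C := (norm_nonneg _).trans (hg x)
  have hb0 : (0 : ℝ) < b := by positivity
  have hdiff : |(a : ℝ) / b - 1| = (b : ℝ)⁻¹ * |(a : ℝ) - b| := by
    rw [div_sub_one hb0.ne', abs_div, abs_of_pos hb0, div_eq_inv_mul]
  have hweights : |(a : ℝ)⁻¹ - (b : ℝ)⁻¹| * a ≤ |(a : ℝ) / b - 1| := by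
    rcases eq_or_ne a 0 with rfl | ha
    · simp
    · have ha0 : (0 : ℝ) < a := by positivity
      rw [← abs_of_pos ha0, ← abs_mul, abs_of_pos ha0, sub_mul, inv_mul_cancel₀ ha0.ne',
        abs_sub_comm, div_eq_inv_mul]
  set S := birkhoffSum f g
  calc ‖(a : ℝ)⁻¹ • S a x - (b : ℝ)⁻¹ • S b x‖
      = ‖((a : ℝ)⁻¹ - (b : ℝ)⁻¹) • S a x + (b : ℝ)⁻¹ • (S a x - S b x)‖ := by
        congr 1
        module
    _ ≤ |(a : ℝ)⁻¹ - (b : ℝ)⁻¹| * ‖S a x‖ + (b : ℝ)⁻¹ * ‖S a x - S b x‖ := by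
        refine (norm_add_le _ _).trans_eq ?_
        rw [norm_smul, norm_smul, Real.norm_eq_abs, norm_inv, Real.norm_natCast]
    _ ≤ |(a : ℝ)⁻¹ - (b : ℝ)⁻¹| * (a * C) + (b : ℝ)⁻¹ * (|(a : ℝ) - b| * C) := by
        gcongr
        · exact norm_birkhoffSum_le hg a x
        · exact norm_birkhoffSum_sub_birkhoffSum_le hg a b x
    _ = |(a : ℝ)⁻¹ - (b : ℝ)⁻¹| * a * C + |(a : ℝ) / b - 1| * C := by
        rw [hdiff]
        ring
    _ ≤ |(a : ℝ) / b - 1| * C + |(a : ℝ) / b - 1| * C := by gcongr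
    _ = 2 * C * |(a : ℝ) / b - 1| := by ring

end NormedSpace

section LargePart

variable {α E : Type*} [SeminormedAddCommGroup E]

/-- The part of `F` of norm greater than `k`, extended by zero; `F - largePart k F` is the
corresponding truncation. -/
noncomputable def largePart (k : ℝ) (F : α → E) : α → E :=
  {x | k < ‖F x‖}.indicator F

lemma norm_sub_largePart_le {k : ℝ} (hk : 0 ≤ k) (F : α → E) (x : α) :
    ‖(F - largePart k F) x‖ ≤ k := by
  by_cases hx : k < ‖F x‖ <;> simp [largePart, hx, hk, le_of_not_gt]

lemma largePart_eq_zero {k : ℝ} {F : α → E} (h : ∀ x, ‖F x‖ ≤ k) : largePart k F = 0 :=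
  Set.indicator_eq_zero.2 <| by simp [Set.disjoint_left, h]

lemma sum_norm_largePart [Fintype α] (k : ℝ) (F : α → E) :
    ∑ x, ‖largePart k F x‖ = ∑ x with k < ‖F x‖, ‖F x‖ := by
  simp [largePart, Set.indicator_apply, Finset.sum_filter, apply_ite]

lemma norm_birkhoffAverage_sub_birkhoffAverage_le_add_largePart [NormedSpace ℝ E] (f : α → α)
    (F : α → E) {k : ℝ} (hk : 0 ≤ k) (a : ℕ) {b : ℕ} (hb : b ≠ 0) (x : α) :
    ‖birkhoffAverage ℝ f F a x - birkhoffAverage ℝ f F b x‖ ≤ 2 * k * |(a : ℝ) / b - 1| +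
      birkhoffAverage ℝ f (fun y ↦ ‖largePart k F y‖) a x +
      birkhoffAverage ℝ f (fun y ↦ ‖largePart k F y‖) b x := by
  have hsplit (n : ℕ) : birkhoffAverage ℝ f F n x =
      birkhoffAverage ℝ f (F - largePart k F) n x + birkhoffAverage ℝ f (largePart k F) n x := by
    rw [birkhoffAverage_sub, Pi.sub_apply, Pi.sub_apply, sub_add_cancel]
  rw [hsplit a, hsplit b, add_sub_add_comm, add_assoc]
  refine (norm_add_le _ _).trans (add_le_add ?_ ((norm_sub_le _ _).trans (add_le_add ?_ ?_)))
  · exact norm_birkhoffAverage_sub_birkhoffAverage_le (norm_sub_largePart_le hk F) a hb x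
  · exact norm_birkhoffAverage_le_birkhoffAverage_norm f _ a x
  · exact norm_birkhoffAverage_le_birkhoffAverage_norm f _ b x

end LargePart

section Family

variable {ι E : Type*} {l : Filter ι} {Y : ι → Type*} [SeminormedAddCommGroup E]

/-- Uniform integrability along `l` of functions on finite sets with the normalized counting
measure. -/
def UniformlyIntegrableOnFinite [∀ n, Fintype (Y n)] (l : Filter ι) (F : ∀ n, Y n → E) : Prop :=
  ∀ ε > 0, ∃ k₀ : ℕ, ∀ᶠ n in l, ∀ k ≥ k₀,
    1 / (Fintype.card (Y n) : ℝ) * ∑ x with (k : ℝ) < ‖F n x‖, ‖F n x‖ < ε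

/-- Uniform integrability of the family `F` with respect to the uniform measures on the orbit
segments `y, T y, …, T^(K - 1) y`, uniformly in the starting point `y`. As the norm of the large
part decreases with the cutoff, asking for all large natural `k` amounts to asking for some real
one. -/
def UniformlyIntegrableOnOrbits (l : Filter ι) (T : ∀ n, Y n → Y n) (F : ∀ n, Y n → E)
    (K : ι → ℕ) : Prop :=
  ∀ ε > 0, ∀ᶠ k : ℕ in atTop, ∀ᶠ n in l, ∀ y,
    birkhoffAverage ℝ (T n) (fun x ↦ ‖largePart k (F n) x‖) (K n) y ≤ ε

namespace UniformlyIntegrableOnOrbits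

variable {T : ∀ n, Y n → Y n} {F : ∀ n, Y n → E} {K : ι → ℕ}

lemma of_bounded {B : ℝ} (hB : ∀ᶠ n in l, ∀ y, ‖F n y‖ ≤ B) :
    UniformlyIntegrableOnOrbits l T F K := by
  intro ε hε
  filter_upwards [tendsto_natCast_atTop_atTop.eventually_ge_atTop B] with k hk
  filter_upwards [hB] with n hn y
  simpa [largePart_eq_zero fun x ↦ (hn x).trans hk, birkhoffAverage, birkhoffSum] using hε.le

lemma of_isCycleOn [∀ n, Fintype (Y n)] {σ : ∀ n, Equiv.Perm (Y n)}
    (hσ : ∀ n, (σ n).IsCycleOn Set.univ) (hF : UniformlyIntegrableOnFinite l F) :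
    UniformlyIntegrableOnOrbits l (fun n ↦ σ n) F fun n ↦ Fintype.card (Y n) := by
  intro ε hε
  obtain ⟨k₀, hk₀⟩ := hF ε hε
  filter_upwards [eventually_ge_atTop k₀] with k hk
  filter_upwards [hk₀] with n hn y
  rw [birkhoffAverage, birkhoffSum_card_of_isCycleOn_univ (hσ n), sum_norm_largePart,
    smul_eq_mul, ← one_div]
  exact (hn k hk).le

lemma of_isBigO {L : ι → ℕ} (h : UniformlyIntegrableOnOrbits l T F K)
    (hK : ∀ᶠ n in l, K n ≠ 0) (hKL : (fun n ↦ (K n : ℝ)) =O[l] fun n ↦ (L n : ℝ)) :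
    UniformlyIntegrableOnOrbits l T F L := by
  intro ε hε
  obtain ⟨C, hC, hKC⟩ := hKL.exists_pos
  filter_upwards [h (ε / (1 + C)) (by positivity)] with k hk
  filter_upwards [hk, hK, hKC.bound] with n hn hKn hKLn y
  rw [Real.norm_natCast, Real.norm_natCast] at hKLn
  calc birkhoffAverage ℝ (T n) (fun x ↦ ‖largePart k (F n) x‖) (L n) y
      ≤ (1 + K n / L n) * (ε / (1 + C)) :=
        birkhoffAverage_le_of_forall_birkhoffAverage_le (fun _ ↦ norm_nonneg _) hKn hn _ y
    _ ≤ (1 + C) * (ε / (1 + C)) := by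
        gcongr
        exact div_le_of_le_mul₀ (Nat.cast_nonneg _) hC.le hKLn
    _ = ε := mul_div_cancel₀ ε (by positivity)

lemma of_transitive [∀ n, Fintype (Y n)] [∀ n, Nonempty (Y n)] (hT : ∀ n, Bijective (T n))
    (htr : ∀ n, ∃ x, ∀ y, ∃ i : ℕ, (T n)^[i] x = y)
    (hF : UniformlyIntegrableOnFinite l F)
    (hK : (fun n ↦ (Fintype.card (Y n) : ℝ)) =O[l] fun n ↦ (K n : ℝ)) :
    UniformlyIntegrableOnOrbits l T F K := by
  let σ (n : ι) : Equiv.Perm (Y n) := .ofBijective (T n) (hT n)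
  have hσ (n : ι) : (σ n).IsCycleOn Set.univ := isCycleOn_univ_of_exists_forall_iterate_eq (htr n)
  exact (of_isCycleOn hσ hF).of_isBigO (.of_forall fun _ ↦ Fintype.card_ne_zero) hK

end UniformlyIntegrableOnOrbits

lemma isBigO_of_liminf_div_pos {u v : ι → ℝ}
    (hbdd : l.IsBoundedUnder (· ≥ ·) fun n ↦ u n / v n)
    (hpos : 0 < l.liminf fun n ↦ u n / v n) : v =O[l] u := by
  obtain ⟨c, hc, hcl⟩ := exists_between hpos
  refine .of_bound c⁻¹ ?_
  filter_upwards [eventually_lt_of_lt_liminf hcl hbdd] with n hn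
  have hv : 0 < ‖v n‖ := norm_pos_iff.2 fun hv ↦ by
    rw [hv, div_zero] at hn
    exact hn.not_gt hc
  rw [le_inv_mul_iff₀ hc, ← le_div_iff₀ hv, ← norm_div]
  exact hn.le.trans (le_abs_self _)

lemma tendsto_sup'_norm_zero [∀ n, Fintype (Y n)] [∀ n, Nonempty (Y n)] {G : ∀ n, Y n → E}
    (hG : ∀ ε > 0, ∀ᶠ n in l, ∀ y, ‖G n y‖ < ε) :
    Tendsto (fun n ↦ Finset.univ.sup' Finset.univ_nonempty fun y ↦ ‖G n y‖) l (𝓝 0) := by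
  refine tendsto_order.2 ⟨fun a ha ↦ .of_forall fun n ↦ ?_, fun ε hε ↦ ?_⟩
  · obtain ⟨y⟩ := ‹∀ n, Nonempty (Y n)› n
    exact (Finset.lt_sup'_iff _).2 ⟨y, Finset.mem_univ y, ha.trans_le (norm_nonneg _)⟩
  · filter_upwards [hG ε hε] with n hn
    exact (Finset.sup'_lt_iff _).2 fun y _ ↦ hn y

theorem erg_mean_stabilization_uniform_general [NormedSpace ℝ E] {T : ∀ n, Y n → Y n}
    {F : ∀ n, Y n → E} {K L : ι → ℕ} (hF : UniformlyIntegrableOnOrbits l T F K)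
    (hKL : Tendsto (fun n ↦ (K n : ℝ) / (L n : ℝ)) l (𝓝 1)) {ε : ℝ} (hε : 0 < ε) :
    ∀ᶠ n in l, ∀ y,
      ‖birkhoffAverage ℝ (T n) (F n) (K n) y - birkhoffAverage ℝ (T n) (F n) (L n) y‖ < ε := by
  have hne : ∀ᶠ n in l, K n ≠ 0 ∧ L n ≠ 0 := by
    filter_upwards [hKL.eventually_ne one_ne_zero] with n hn
    exact_mod_cast div_ne_zero_iff.1 hn
  have hFL : UniformlyIntegrableOnOrbits l T F L :=
    hF.of_isBigO (hne.mono fun _ ↦ And.left) (isEquivalent_of_tendsto_one hKL).isBigO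
  obtain ⟨k, hkK, hkL⟩ := ((hF (ε / 3) (by positivity)).and (hFL (ε / 3) (by positivity))).exists
  have hlim : Tendsto (fun n ↦ 2 * (k : ℝ) * |(K n : ℝ) / L n - 1|) l (𝓝 0) := by
    simpa using (hKL.sub_const 1).abs.const_mul (2 * (k : ℝ))
  filter_upwards [hne, hkK, hkL, hlim.eventually_lt_const (show 0 < ε / 3 by positivity)]
    with n hn hKn hLn hlt y
  linarith [norm_birkhoffAverage_sub_birkhoffAverage_le_add_largePart (T n) (F n) k.cast_nonneg
    (K n) hn.2 y, hKn y, hLn y]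

end Family

open scoped Classical in
/-- For a sequence of finite sets `Y n` with `|Y n| = M n → ∞`, permutations `T n`,
a uniformly integrable sequence `F n`, and sequences `K n, L n ≥ 1` with `K n / M n`
bounded, `liminf K n / M n > 0` and `K n / L n → 1`: if in addition each `T n` is
transitive (a single cycle of length `M n`), or the `F n` are uniformly bounded, then
`max_{y ∈ Y n} |A_{K n}(F n,T n,y) − A_{L n}(F n,T n,y)| → 0`. -/
theorem erg_mean_stabilization_uniform
    (Y : ℕ → Type*) [∀ n, Fintype (Y n)] [∀ n, Nonempty (Y n)]
    (hMtop : Tendsto (fun n => Fintype.card (Y n)) atTop atTop)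
    (T : ∀ n, Y n → Y n) (hT : ∀ n, Function.Bijective (T n))
    (F : ∀ n, Y n → ℝ)
    (hUI : ∀ ε > (0 : ℝ), ∃ n₀ k₀ : ℕ, ∀ n ≥ n₀, ∀ k ≥ k₀,
      (1 / (Fintype.card (Y n) : ℝ)) *
        ∑ x ∈ Finset.univ.filter (fun x : Y n => (k : ℝ) < |F n x|), |F n x| < ε)
    (K L : ℕ → ℕ) (hK1 : ∀ n, 1 ≤ K n) (hL1 : ∀ n, 1 ≤ L n)
    (hKbdd : ∃ B : ℝ, ∀ n, (K n : ℝ) / (Fintype.card (Y n) : ℝ) ≤ B)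
    (hKpos : 0 < Filter.atTop.liminf (fun n => (K n : ℝ) / (Fintype.card (Y n) : ℝ)))
    (hKL : Tendsto (fun n => (K n : ℝ) / (L n : ℝ)) atTop (𝓝 1))
    (hextra : (∀ n, ∃ x : Y n, ∀ y : Y n, ∃ i : ℕ, (T n)^[i] x = y) ∨
      (∃ B : ℝ, ∀ n, ∀ y : Y n, |F n y| ≤ B)) :
    Tendsto (fun n => Finset.univ.sup' Finset.univ_nonempty (fun y : Y n =>
        |ergAvg (T n) (F n) (K n) y - ergAvg (T n) (F n) (L n) y|))
      atTop (𝓝 0) := by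
  have hF : UniformlyIntegrableOnOrbits atTop T F K := by
    rcases hextra with htr | ⟨B, hB⟩
    · have hFfin : UniformlyIntegrableOnFinite atTop F := fun ε hε ↦
        let ⟨n₀, k₀, h⟩ := hUI ε hε
        ⟨k₀, eventually_atTop.2 ⟨n₀, h⟩⟩
      have hMK : (fun n ↦ (Fintype.card (Y n) : ℝ)) =O[atTop] fun n ↦ (K n : ℝ) :=
        isBigO_of_liminf_div_pos (isBoundedUnder_of ⟨0, fun n ↦ by positivity⟩) hKpos
      exact .of_transitive hT htr hFfin hMK
    · exact .of_bounded (.of_forall hB)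
  simp only [ergAvg_eq_birkhoffAverage, ← Real.norm_eq_abs]
  exact tendsto_sup'_norm_zero fun ε hε ↦ erg_mean_stabilization_uniform_general hF hKL hε
end

section
/- For every sequence f : ℕ → ℝ* of hyperreal numbers such that f(n) is infinite positive for every n ∈ ℕ, there exists a hyperreal number ω that is infinite positive and satisfies ω < f(n) for all n ∈ ℕ. -/
/-!
A germ is infinite positive exactly when its representatives tend to infinity along the
ultrafilter, so this is du Bois-Reymond's diagonal argument. If `v k → ∞`, then for each `k` the
inequalities `v k < g 0 x, …, v k < g k x` hold eventually. Send `x` to `v k` for the largest `k`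
for which they do; it exists because `v k < g 0 x` bounds `k`.
-/

open Filter

theorem exists_tendsto_atTop_and_eventually {α : Type*} {l : Filter α} {p : ℕ → α → Prop}
    (hp : ∀ k, ∀ᶠ x in l, p k x) (hbdd : ∀ᶠ x in l, BddAbove {k | p k x}) :
    ∃ κ : α → ℕ, Tendsto κ l atTop ∧ ∀ᶠ x in l, p (κ x) x := by
  refine ⟨fun x ↦ sSup {k | p k x}, tendsto_atTop.2 fun k ↦ ?_, ?_⟩
  · filter_upwards [hp k, hbdd] with x hx hbdd_x using le_csSup hbdd_x hx
  · filter_upwards [hp 0, hbdd] with x hx hbdd_x using Nat.sSup_mem ⟨0, hx⟩ hbdd_x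

section Preorder

variable {α β ι : Type*} [Preorder β] [NoMaxOrder β]

theorem exists_tendsto_atTop_forall_eventually_lt [IsDirectedOrder β] [Nonempty β]
    [(atTop : Filter β).IsCountablyGenerated] [Countable ι] [Nonempty ι] {l : Filter α}
    {g : ι → α → β} (hg : ∀ i, Tendsto (g i) l atTop) :
    ∃ h : α → β, Tendsto h l atTop ∧ ∀ i, ∀ᶠ x in l, h x < g i x := by
  obtain ⟨v, hv⟩ := exists_seq_tendsto (atTop : Filter β)
  obtain ⟨e, he⟩ := exists_surjective_nat ι
  have eventually_lt (k : ℕ) : ∀ᶠ x in l, ∀ n ≤ k, v k < g (e n) x :=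
    (Set.finite_Iic k).eventually_all.2 fun n _ ↦ (hg (e n)).eventually_gt_atTop (v k)
  have bddAbove (x : α) : BddAbove {k | ∀ n ≤ k, v k < g (e n) x} := by
    obtain ⟨N, hN⟩ := eventually_atTop.1 (hv.eventually_ge_atTop (g (e 0) x))
    refine ⟨N, fun k hk ↦ le_of_not_ge fun hNk ↦ ?_⟩
    exact (hN k hNk).not_gt (hk 0 k.zero_le)
  obtain ⟨κ, hκ, hlt⟩ :=
    exists_tendsto_atTop_and_eventually eventually_lt (.of_forall bddAbove)
  refine ⟨v ∘ κ, hv.comp hκ, he.forall.2 fun n ↦ ?_⟩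
  filter_upwards [hlt, hκ.eventually_ge_atTop n] with x hx hn using hx n hn

theorem germ_tendsto_atTop_iff_forall_const_lt {φ : Ultrafilter α} {x : Germ (φ : Filter α) β} :
    x.Tendsto atTop ↔ ∀ b : β, (b : Germ (φ : Filter α) β) < x := by
  induction x using Germ.inductionOn with | h g =>
  refine ⟨fun hg b ↦ Germ.coe_lt.2 (Tendsto.eventually_gt_atTop hg b), fun hg ↦ ?_⟩
  exact tendsto_atTop.2 fun b ↦ (Germ.coe_lt.1 (hg b)).mono fun _ ↦ le_of_lt

theorem exists_infinitePos_lt_of_forall_infinitePos_general [IsDirectedOrder β] [Nonempty β]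
    [(atTop : Filter β).IsCountablyGenerated] [Countable ι] [Nonempty ι] {φ : Ultrafilter α}
    (f : ι → Germ (φ : Filter α) β) (hf : ∀ i, ∀ b : β, (b : Germ (φ : Filter α) β) < f i) :
    ∃ ω : Germ (φ : Filter α) β,
      (∀ b : β, (b : Germ (φ : Filter α) β) < ω) ∧ ∀ i, ω < f i := by
  choose g hg using fun i ↦ Quot.exists_rep (f i)
  obtain rfl : (fun i ↦ (g i : Germ (φ : Filter α) β)) = f := funext hg
  obtain ⟨h, h_top, h_lt⟩ := exists_tendsto_atTop_forall_eventually_lt fun i ↦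
    Germ.coe_tendsto.1 (germ_tendsto_atTop_iff_forall_const_lt.2 (hf i))
  exact ⟨h, germ_tendsto_atTop_iff_forall_const_lt.1 (Germ.coe_tendsto.2 h_top),
    fun i ↦ Germ.coe_lt.2 (h_lt i)⟩

end Preorder

/-- For every sequence of infinite positive hyperreals `f : ℕ → ℝ*` there exists an
infinite positive hyperreal `ω` below all of them. -/
theorem exists_infinitePos_lt_of_forall_infinitePos
    (f : ℕ → Hyperreal) (hf : ∀ n, (f n).InfinitePos) :
    ∃ ω : Hyperreal, ω.InfinitePos ∧ ∀ n, ω < f n :=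
  exists_infinitePos_lt_of_forall_infinitePos_general f hf
end

section
/- Let (X, ρ) be a compact metric space and ν a Borel probability measure on X such that every open ball of positive radius has positive ν-measure and every Borel set of positive ν-measure is infinite. Let τ : X → X be a ν-measure-preserving transformation whose set D_τ of points of continuity satisfies ν(D_τ) = 1. Then there exist a sequence of finite nonempty subsets Y_n ⊆ X and permutations T_n : Y_n → Y_n, each of which is a transitive permutation (a single cycle of length |Y_n|), such that: (a) the empirical measures δ_{Y_n} = (1/|Y_n|)·Σ_{y ∈ Y_n} δ_y converge to ν in the weak-* topology; and (b) for every ε > 0, lim_{n→∞} (1/|Y_n|)·|{y ∈ Y_n : ρ(T_n(y), τ(y)) > ε}| = 0. -/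
open MeasureTheory Filter Topology

/-!
Fix finitely many bounded continuous functions and an error `ε`. By the strong law of large numbers
applied to Birkhoff averages, there are finitely many points whose orbit segments of a long common
length `k + 1` nearly integrate the given functions. Almost every point `w` is such that the points
`x` with `x` near `w` and `τ x` near `τ w` have positive measure, because almost every `(w, τ w)`
lies in the support of the graph measure. All points on the segments can be taken of this kind,
hence can be moved slightly to pairwise distinct points. The cycle running through the moved
segments one after the other follows `τ` up to `ε`, except at the ends of the segments, a
proportion `1 / (k + 1)` of all points. As weak convergence is metrizable, such cycles for smaller
and smaller neighbourhoods of the measure form the required sequence.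
-/

open scoped BigOperators BoundedContinuousFunction Finset

section Combinatorics

variable {ι X : Type*}

theorem exists_injective_forall_mem_of_infinite [Finite ι] {S : ι → Set X}
    (hS : ∀ i, (S i).Infinite) : ∃ x : ι → X, Function.Injective x ∧ ∀ i, x i ∈ S i := by
  classical
  have := Fintype.ofFinite ι
  choose t htS htcard using fun i => (hS i).exists_subset_card_eq (Fintype.card ι)
  have hall : ∀ s : Finset ι, #s ≤ #(s.biUnion t) := by
    intro s
    obtain rfl | ⟨i, hi⟩ := s.eq_empty_or_nonempty
    · simp
    · calc #s ≤ Fintype.card ι := s.card_le_univ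
        _ = #(t i) := (htcard i).symm
        _ ≤ #(s.biUnion t) := Finset.card_le_card (Finset.subset_biUnion_of_mem t hi)
  obtain ⟨x, hx, hxt⟩ := (Finset.all_card_le_biUnion_card_iff_exists_injective t).1 hall
  exact ⟨x, hx, fun i => htS i (hxt i)⟩

theorem exists_perm_isCycleOn_range {N : ℕ} {x : Fin N → X} (hx : Function.Injective x) :
    ∃ T : Equiv.Perm X, T.IsCycleOn (Set.range x) ∧
      ∀ i j : Fin N, (j : ℕ) = i + 1 → T (x i) = x j := by
  classical
  have hnodup : (List.ofFn x).Nodup := List.nodup_ofFn.2 hx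
  refine ⟨(List.ofFn x).formPerm, ?_, fun i j hij => ?_⟩
  · simpa only [List.mem_ofFn', Set.ofPred_mem_eq] using hnodup.isCycleOn_formPerm
  · have := List.formPerm_apply_lt_getElem _ hnodup i (by simp [← hij])
    simpa [← hij] using this

theorem exists_perm_isCycleOn_range_prod {M k : ℕ} {x : Fin M × Fin (k + 1) → X}
    (hx : Function.Injective x) :
    ∃ T : Equiv.Perm X, T.IsCycleOn (Set.range x) ∧
      ∀ (q : Fin M) (s : Fin k), T (x (q, s.castSucc)) = x (q, s.succ) := by
  obtain ⟨T, hcycle, hT⟩ :=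
    exists_perm_isCycleOn_range (hx.comp (finProdFinEquiv (m := M) (n := k + 1)).symm.injective)
  rw [EquivLike.range_comp] at hcycle
  refine ⟨T, hcycle, fun q s => ?_⟩
  have hsucc : (finProdFinEquiv (q, s.succ) : ℕ) = finProdFinEquiv (q, s.castSucc) + 1 := by
    simp only [finProdFinEquiv_apply_val, Fin.val_succ, Fin.val_castSucc]
    ring
  simpa using hT _ _ hsucc

end Combinatorics

section Measure

theorem exists_seq_forall_tendsto_average {X ι E : Type*} [MeasurableSpace X] [Countable ι]
    [NormedAddCommGroup E] [NormedSpace ℝ E] [CompleteSpace E] [MeasurableSpace E] [BorelSpace E]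
    {ν : Measure X} [IsProbabilityMeasure ν] {g : ι → X → E} (hg : ∀ j, Measurable (g j))
    (hgi : ∀ j, Integrable (g j) ν) {p : X → Prop} (hp : ∀ᵐ x ∂ν, p x) :
    ∃ z : ℕ → X, (∀ m, p (z m)) ∧ ∀ j,
      Tendsto (fun n : ℕ => (n : ℝ)⁻¹ • ∑ m ∈ Finset.range n, g j (z m)) atTop
        (𝓝 (∫ x, g j x ∂ν)) := by
  obtain ⟨Ω, _, P, Z, hZ, hlaw, hindep, _⟩ := ProbabilityTheory.exists_iid ℕ ν
  have hmp : ∀ m, MeasurePreserving (Z m) P ν := fun m => (hlaw m).measurePreserving (hZ m)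
  have hpZ : ∀ᵐ ω ∂P, ∀ m, p (Z m ω) :=
    ae_all_iff.2 fun m => (hmp m).quasiMeasurePreserving.ae hp
  have hlln : ∀ᵐ ω ∂P, ∀ j,
      Tendsto (fun n : ℕ => (n : ℝ)⁻¹ • ∑ m ∈ Finset.range n, g j (Z m ω)) atTop
        (𝓝 (∫ x, g j x ∂ν)) := by
    refine ae_all_iff.2 fun j => ?_
    rw [← (hlaw 0).integral_comp (hgi j).aestronglyMeasurable]
    exact ProbabilityTheory.strong_law_ae (fun m => g j ∘ Z m)
      ((hmp 0).integrable_comp_of_integrable (hgi j))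
      (fun a b hab => (hindep.indepFun hab).comp (hg j) (hg j))
      (fun m => ((hlaw m).identDistrib (hlaw 0)).comp (hg j))
  obtain ⟨ω, hω, hlim⟩ := (hpZ.and hlln).exists
  exact ⟨fun m => Z m ω, hω, hlim⟩

section BirkhoffAverage

variable {X E : Type*} [MeasurableSpace X] [NormedAddCommGroup E] [NormedSpace ℝ E] {ν : Measure X}
  {τ : X → X} {f : X → E}

theorem measurable_birkhoffAverage [MeasurableSpace E] [BorelSpace E] [SecondCountableTopology E]
    (hτ : Measurable τ) (hf : Measurable f) (k : ℕ) : Measurable (birkhoffAverage ℝ τ f k) := by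
  change Measurable fun x => (k : ℝ)⁻¹ • ∑ i ∈ Finset.range k, f (τ^[i] x)
  exact (Finset.measurable_fun_sum _ fun i _ => hf.comp (hτ.iterate i)).const_smul _

theorem integrable_birkhoffAverage (hτ : MeasurePreserving τ ν ν) (hf : Integrable f ν) (k : ℕ) :
    Integrable (birkhoffAverage ℝ τ f k) ν := by
  change Integrable (fun x => (k : ℝ)⁻¹ • ∑ i ∈ Finset.range k, f (τ^[i] x)) ν
  have hint : ∀ i, Integrable (fun x => f (τ^[i] x)) ν := fun i =>
    (hτ.iterate i).integrable_comp_of_integrable hf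
  exact (integrable_finsetSum _ fun i _ => hint i).smul (k : ℝ)⁻¹

theorem integral_birkhoffAverage (hτ : MeasurePreserving τ ν ν) (hf : Integrable f ν) {k : ℕ}
    (hk : k ≠ 0) : ∫ x, birkhoffAverage ℝ τ f k x ∂ν = ∫ x, f x ∂ν := by
  have hiter : ∀ i, ∫ x, f (τ^[i] x) ∂ν = ∫ x, f x ∂ν := fun i =>
    (hτ.iterate i).hasLaw.integral_comp hf.aestronglyMeasurable
  have hint : ∀ i, Integrable (fun x => f (τ^[i] x)) ν := fun i =>
    (hτ.iterate i).integrable_comp_of_integrable hf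
  simp only [birkhoffAverage, birkhoffSum]
  rw [integral_smul, integral_finsetSum _ fun i _ => hint i]
  simp only [hiter, Finset.sum_const, Finset.card_range, ← Nat.cast_smul_eq_nsmul ℝ]
  exact inv_smul_smul₀ (Nat.cast_ne_zero.2 hk) _

end BirkhoffAverage

theorem expect_orbitSegments_eq {X : Type*} (τ : X → X) (f : X → ℝ) (z : ℕ → X) (M k : ℕ) :
    𝔼 i : Fin M × Fin k, f (τ^[i.2] (z i.1)) =
      (M : ℝ)⁻¹ • ∑ m ∈ Finset.range M, birkhoffAverage ℝ τ f k (z m) := by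
  simp only [Fintype.expect_eq_sum_div_card, Fintype.sum_prod_type, Fintype.card_prod,
    Fintype.card_fin, birkhoffAverage, birkhoffSum, Finset.sum_range, smul_eq_mul, Nat.cast_mul,
    ← Finset.mul_sum]
  rw [div_eq_inv_mul, mul_inv, mul_assoc]

theorem exists_orbitSegments_expect_near_integral {X ι : Type*} [MeasurableSpace X] [Finite ι]
    {ν : Measure X} [IsProbabilityMeasure ν] {τ : X → X} (hτ : MeasurePreserving τ ν ν)
    {p : X → Prop} (hp : ∀ᵐ x ∂ν, p x) {f : ι → X → ℝ} (hf : ∀ j, Measurable (f j))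
    (hfi : ∀ j, Integrable (f j) ν) {k : ℕ} (hk : k ≠ 0) {ε : ℝ} (hε : 0 < ε) :
    ∃ M ≠ 0, ∃ z : ℕ → X, (∀ m i, p (τ^[i] (z m))) ∧ ∀ j,
      |𝔼 i : Fin M × Fin k, f j (τ^[i.2] (z i.1)) - ∫ x, f j x ∂ν| < ε := by
  have horbit : ∀ᵐ x ∂ν, ∀ i, p (τ^[i] x) :=
    ae_all_iff.2 fun i => (hτ.iterate i).quasiMeasurePreserving.ae hp
  obtain ⟨z, hz, hlim⟩ := exists_seq_forall_tendsto_average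
    (fun j => measurable_birkhoffAverage hτ.measurable (hf j) k)
    (fun j => integrable_birkhoffAverage hτ (hfi j) k) horbit
  have hnear : ∀ᶠ M : ℕ in atTop, ∀ j,
      |𝔼 i : Fin M × Fin k, f j (τ^[i.2] (z i.1)) - ∫ x, f j x ∂ν| < ε := by
    refine eventually_all.2 fun j => ?_
    have := hlim j
    simp only [integral_birkhoffAverage hτ (hfi j) hk, ← expect_orbitSegments_eq] at this
    exact Metric.tendsto_nhds.1 this ε hε
  obtain ⟨M, hM, hM0⟩ := (hnear.and (eventually_ne_atTop 0)).exists
  exact ⟨M, hM0, z, hz, hM⟩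

theorem ae_forall_nhds_infinite_inter_preimage {X Z : Type*} [TopologicalSpace X]
    [SecondCountableTopology X] [MeasurableSpace X] [OpensMeasurableSpace X] [TopologicalSpace Z]
    [SecondCountableTopology Z] [MeasurableSpace Z] [OpensMeasurableSpace Z] {ν : Measure X}
    (hinf : ∀ s : Set X, MeasurableSet s → 0 < ν s → s.Infinite) {τ : X → Z} (hτ : Measurable τ) :
    ∀ᵐ w ∂ν, ∀ U ∈ 𝓝 w, ∀ V ∈ 𝓝 (τ w), (U ∩ τ ⁻¹' V).Infinite := by
  have hgraph : Measurable fun x => (x, τ x) := measurable_id.prodMk hτ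
  have hsupp : ∀ᵐ q ∂ν.map fun x => (x, τ x), q ∈ (ν.map fun x => (x, τ x)).support :=
    Measure.support_mem_ae
  filter_upwards [ae_of_ae_map hgraph.aemeasurable hsupp] with w hw U hU V hV
  have hmeas : MeasurableSet (interior U ×ˢ interior V) :=
    isOpen_interior.measurableSet.prod isOpen_interior.measurableSet
  have hpos := (Measure.mem_support_iff_forall _).1 hw _
    (prod_mem_nhds (interior_mem_nhds.2 hU) (interior_mem_nhds.2 hV))
  rw [Measure.map_apply hgraph hmeas] at hpos
  exact (hinf _ (hgraph hmeas) hpos).mono fun x hx =>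
    ⟨interior_subset hx.1, interior_subset (s := V) hx.2⟩

theorem mem_closure_of_forall_exists_integral_near {X : Type*} [TopologicalSpace X]
    [MeasurableSpace X] [OpensMeasurableSpace X] {ν : ProbabilityMeasure X}
    {S : Set (ProbabilityMeasure X)}
    (h : ∀ (F : Finset (X →ᵇ ℝ)) (ε : ℝ), 0 < ε →
      ∃ μ ∈ S, ∀ f ∈ F, |∫ x, f x ∂(μ : Measure X) - ∫ x, f x ∂(ν : Measure X)| < ε) :
    ν ∈ closure S := by
  classical
  choose μ hμS hμ using fun i : Finset (X →ᵇ ℝ) × ℕ => h i.1 (1 / (i.2 + 1)) Nat.one_div_pos_of_nat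
  refine mem_closure_of_tendsto (b := atTop) (f := μ) ?_ (Eventually.of_forall hμS)
  refine ProbabilityMeasure.tendsto_iff_forall_integral_tendsto.2 fun f =>
    Metric.tendsto_nhds.2 fun ε hε => ?_
  obtain ⟨n, hn⟩ := exists_nat_one_div_lt hε
  filter_upwards [eventually_ge_atTop ({f}, n)] with i hi
  calc |∫ x, f x ∂(μ i : Measure X) - ∫ x, f x ∂(ν : Measure X)|
      < 1 / (i.2 + 1) := hμ i f (Finset.singleton_subset_iff.1 hi.1)
    _ ≤ 1 / (n + 1) := Nat.one_div_le_one_div hi.2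
    _ < ε := hn

/-- The empirical measure `δ_Y` of a finite set `Y`, the uniform average of the Dirac measures at
its points. It is a probability measure when `Y` is nonempty, and zero when `Y` is empty. -/
noncomputable def empiricalMeasure {X : Type*} [MeasurableSpace X] (Y : Finset X) : Measure X :=
  (#Y : ENNReal)⁻¹ • ∑ y ∈ Y, Measure.dirac y

theorem isProbabilityMeasure_empiricalMeasure {X : Type*} [MeasurableSpace X] {Y : Finset X}
    (hY : Y.Nonempty) : IsProbabilityMeasure (empiricalMeasure Y) where
  measure_univ := by
    simp [empiricalMeasure, ENNReal.inv_mul_cancel, hY.card_ne_zero]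

theorem integral_empiricalMeasure {X : Type*} [MeasurableSpace X] {f : X → ℝ} (hf : Measurable f)
    (Y : Finset X) : ∫ x, f x ∂empiricalMeasure Y = 𝔼 y ∈ Y, f y := by
  have hdirac : ∀ y, ∫ x, f x ∂Measure.dirac y = f y := fun y =>
    integral_dirac' f y hf.stronglyMeasurable
  have hint : ∀ y ∈ Y, Integrable f (Measure.dirac y) := fun y _ =>
    integrable_dirac' hf.stronglyMeasurable (by simp)
  rw [empiricalMeasure, integral_smul_measure, integral_finsetSum_measure hint,
    Finset.expect_eq_sum_div_card, div_eq_inv_mul]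
  simp [hdirac]

end Measure

section ApproximatingCycle

variable {X : Type*} [PseudoMetricSpace X] {τ : X → X} {ε : ℝ}

open scoped Classical in
/-- The permutation `T` restricts to a transitive permutation of the finite nonempty set `Y`, and
at all but a proportion `ε` of the points of `Y` it is `ε`-close to `τ`: the approximations of a
transformation from which the sequence `(Y n, T n)` is built. The permutation is encoded as one of
the whole space, whose values outside `Y` are irrelevant. -/
structure IsApproximatingCycle (τ : X → X) (ε : ℝ) (Y : Finset X) (T : Equiv.Perm X) : Prop where
  nonempty : Y.Nonempty
  isCycleOn : T.IsCycleOn (Y : Set X)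
  card_filter_le : (#{y ∈ Y | ε < dist (T y) (τ y)} : ℝ) ≤ ε * #Y

open scoped Classical in
theorem IsApproximatingCycle.tendsto_proportion {Y : ℕ → Finset X} {T : ℕ → Equiv.Perm X}
    (h : ∀ n : ℕ, IsApproximatingCycle τ (1 / ((n : ℝ) + 1)) (Y n) (T n)) (hε : 0 < ε) :
    Tendsto (fun n => 1 / (#(Y n) : ℝ) * #{y ∈ Y n | ε < dist (T n y) (τ y)}) atTop (𝓝 0) := by
  refine tendsto_of_tendsto_of_tendsto_of_le_of_le' tendsto_const_nhds
    (tendsto_one_div_add_atTop_nhds_zero_nat (𝕜 := ℝ))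
    (Eventually.of_forall fun n => by positivity) ?_
  obtain ⟨m, hm⟩ := exists_nat_one_div_lt hε
  filter_upwards [eventually_ge_atTop m] with n hn
  have hcard : (0 : ℝ) < #(Y n) := Nat.cast_pos.2 (h n).nonempty.card_pos
  rw [one_div_mul_eq_div, div_le_iff₀ hcard]
  refine le_trans ?_ (h n).card_filter_le
  gcongr with y _
  exact ((Nat.one_div_le_one_div hn).trans_lt hm).le

open scoped Classical in
theorem exists_isApproximatingCycle_image {M k : ℕ} (hM : M ≠ 0) (hk : 1 ≤ ε * (k + 1))
    {x : Fin M × Fin (k + 1) → X} (hx : Function.Injective x)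
    (hτ : ∀ (q : Fin M) (s : Fin k), dist (x (q, s.succ)) (τ (x (q, s.castSucc))) ≤ ε) :
    ∃ T, IsApproximatingCycle τ ε (Finset.univ.image x) T := by
  obtain ⟨T, hcycle, hT⟩ := exists_perm_isCycleOn_range_prod hx
  have : NeZero M := ⟨hM⟩
  refine ⟨T, Finset.univ_nonempty.image x, by simpa using hcycle, ?_⟩
  have hends : {y ∈ Finset.univ.image x | ε < dist (T y) (τ y)} ⊆
      Finset.univ.image fun q => x (q, Fin.last k) := by
    intro y hy
    simp only [Finset.mem_filter, Finset.mem_image, Finset.mem_univ, true_and] at hy ⊢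
    obtain ⟨⟨⟨q, s⟩, rfl⟩, hdist⟩ := hy
    cases s using Fin.lastCases with
    | last => exact ⟨q, rfl⟩
    | cast s => exact absurd (hT q s ▸ hτ q s) hdist.not_ge
  have hcard : #{y ∈ Finset.univ.image x | ε < dist (T y) (τ y)} ≤ M :=
    (Finset.card_le_card hends).trans (Finset.card_image_le.trans_eq (by simp))
  calc (#{y ∈ Finset.univ.image x | ε < dist (T y) (τ y)} : ℝ)
      ≤ M := by exact_mod_cast hcard
    _ ≤ ε * (k + 1) * M := le_mul_of_one_le_left M.cast_nonneg hk
    _ = ε * #(Finset.univ.image x) := by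
      rw [Finset.card_image_of_injective _ hx]
      simp only [Finset.card_univ, Fintype.card_prod, Fintype.card_fin]
      push_cast
      ring

variable [SecondCountableTopology X] [MeasurableSpace X] [BorelSpace X] {ν : Measure X}
  [IsProbabilityMeasure ν]

theorem exists_isApproximatingCycle_expect_near_integral
    (hinf : ∀ s : Set X, MeasurableSet s → 0 < ν s → s.Infinite)
    (hτ : MeasurePreserving τ ν ν) (F : Finset (X →ᵇ ℝ)) (hε : 0 < ε) {δ : ℝ} (hδ : 0 < δ) :
    ∃ Y T, IsApproximatingCycle τ ε Y T ∧ ∀ f ∈ F, |𝔼 y ∈ Y, f y - ∫ x, f x ∂ν| < δ := by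
  classical
  obtain ⟨k, hk⟩ := exists_nat_one_div_lt hε
  obtain ⟨M, hM, z, hz, hsegments⟩ := exists_orbitSegments_expect_near_integral hτ
    (ae_forall_nhds_infinite_inter_preimage hinf hτ.measurable) (f := fun f : F => (f : X → ℝ))
    (fun f => f.1.continuous.measurable) (fun f => f.1.integrable ν) k.succ_ne_zero (half_pos hδ)
  set w : Fin M × Fin (k + 1) → X := fun i => τ^[i.2] (z i.1)
  have hU : ∀ i, {x | dist x (w i) < ε / 2 ∧ ∀ f ∈ F, |f x - f (w i)| < δ / 2} ∈ 𝓝 (w i) :=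
    fun i => (Metric.eventually_nhds_iff_ball.2 ⟨ε / 2, half_pos hε, fun _ => id⟩).and <|
      (eventually_all_finset F).2 fun f _ =>
        Metric.tendsto_nhds.1 f.continuous.continuousAt _ (half_pos hδ)
  obtain ⟨x, hx, hxw⟩ := exists_injective_forall_mem_of_infinite fun i =>
    hz i.1 i.2 _ (hU i) _ (Metric.ball_mem_nhds _ (half_pos hε))
  have hshift : ∀ (q : Fin M) (s : Fin k), dist (x (q, s.succ)) (τ (x (q, s.castSucc))) ≤ ε := by
    intro q s
    have hnext : w (q, s.succ) = τ (w (q, s.castSucc)) := Function.iterate_succ_apply' τ s (z q)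
    have hnear : dist (x (q, s.succ)) (w (q, s.succ)) < ε / 2 := (hxw _).1.1
    have hnear' : dist (τ (x (q, s.castSucc))) (τ (w (q, s.castSucc))) < ε / 2 := (hxw _).2
    rw [← hnext] at hnear'
    linarith [dist_triangle_right (x (q, s.succ)) (τ (x (q, s.castSucc))) (w (q, s.succ))]
  obtain ⟨T, hT⟩ := exists_isApproximatingCycle_image hM
    ((div_le_iff₀ (by positivity)).1 hk.le) hx hshift
  refine ⟨_, T, hT, fun f hf => ?_⟩
  have : NeZero M := ⟨hM⟩
  have hmove : |𝔼 i, f (x i) - 𝔼 i, f (w i)| ≤ δ / 2 := by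
    rw [← Finset.expect_sub_distrib]
    exact (Finset.abs_expect_le _ _).trans <|
      Finset.expect_le Finset.univ_nonempty fun i _ => ((hxw i).1.2 f hf).le
  rw [Finset.expect_image hx.injOn]
  linarith [abs_sub_le (𝔼 i, f (x i)) (𝔼 i, f (w i)) (∫ x, f x ∂ν), hsegments ⟨f, hf⟩]

theorem mem_closure_setOf_isApproximatingCycle {ν : ProbabilityMeasure X}
    (hinf : ∀ s : Set X, MeasurableSet s → 0 < (ν : Measure X) s → s.Infinite)
    (hτ : MeasurePreserving τ (ν : Measure X) ν) (hε : 0 < ε) :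
    ν ∈ closure {μ : ProbabilityMeasure X |
      ∃ Y T, IsApproximatingCycle τ ε Y T ∧ (μ : Measure X) = empiricalMeasure Y} := by
  refine mem_closure_of_forall_exists_integral_near fun F δ hδ => ?_
  obtain ⟨Y, T, hT, hY⟩ := exists_isApproximatingCycle_expect_near_integral hinf hτ F hε hδ
  refine ⟨⟨_, isProbabilityMeasure_empiricalMeasure hT.nonempty⟩, ⟨Y, T, hT, rfl⟩, fun f hf => ?_⟩
  simpa only [ProbabilityMeasure.coe_mk, integral_empiricalMeasure f.continuous.measurable]
    using hY f hf

end ApproximatingCycle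

open scoped Classical in
theorem exists_finite_approximation_of_dynamical_system_general
    {X : Type*} [PseudoMetricSpace X] [SecondCountableTopology X] [MeasurableSpace X]
    [BorelSpace X] {ν : Measure X} [IsProbabilityMeasure ν]
    (hinf : ∀ s : Set X, MeasurableSet s → 0 < ν s → s.Infinite)
    {τ : X → X} (hτ : MeasurePreserving τ ν ν) :
    ∃ (Y : ℕ → Finset X) (T : ℕ → Equiv.Perm X),
      (∀ n, (Y n).Nonempty) ∧
      (∀ n, (T n).IsCycleOn (Y n : Set X)) ∧
      (∀ f : X →ᵇ ℝ,
        Tendsto (fun n => 1 / (#(Y n) : ℝ) * ∑ y ∈ Y n, f y) atTop (𝓝 (∫ x, f x ∂ν))) ∧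
      (∀ ε > (0 : ℝ),
        Tendsto (fun n => 1 / (#(Y n) : ℝ) * #{y ∈ Y n | ε < dist (T n y) (τ y)})
          atTop (𝓝 0)) := by
  obtain ⟨ν, rfl⟩ : ∃ μ : ProbabilityMeasure X, (μ : Measure X) = ν := ⟨⟨ν, ‹_›⟩, rfl⟩
  obtain ⟨U, hU⟩ := (𝓝 ν).exists_antitone_basis
  choose μ hμU Y T hT hμ using fun n : ℕ =>
    mem_closure_iff_nhds.1 (mem_closure_setOf_isApproximatingCycle hinf hτ
      (Nat.one_div_pos_of_nat (n := n))) (U n) (hU.mem n)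
  refine ⟨Y, T, fun n => (hT n).nonempty, fun n => (hT n).isCycleOn, fun f => ?_,
    fun ε hε => IsApproximatingCycle.tendsto_proportion hT hε⟩
  have hweak := ProbabilityMeasure.tendsto_iff_forall_integral_tendsto.1 (hU.tendsto hμU) f
  simpa only [hμ, integral_empiricalMeasure f.continuous.measurable,
    Finset.expect_eq_sum_div_card, div_eq_inv_mul, one_div, mul_one] using hweak

open scoped Classical in
/-- Existence of finite approximations of a dynamical system: for a compact metric space
`X` with a Borel probability measure `ν` (balls of positive radius have positive measure,
positive-measure sets are infinite) and a measure-preserving transformation `τ` whose set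
of continuity points has full measure, there are finite nonempty subsets `Y n ⊆ X` and
transitive permutations `T n` of `Y n` such that the empirical measures of `Y n` converge
to `ν` weak-* and the proportion of `y ∈ Y n` with `ρ(T n y, τ y) > ε` tends to `0` for
every `ε > 0`. -/
theorem exists_finite_approximation_of_dynamical_system
    {X : Type*} [MetricSpace X] [CompactSpace X] [MeasurableSpace X] [BorelSpace X]
    (ν : Measure X) [IsProbabilityMeasure ν]
    (hball : ∀ (x : X) (r : ℝ), 0 < r → 0 < ν (Metric.ball x r))
    (hinf : ∀ s : Set X, MeasurableSet s → 0 < ν s → s.Infinite)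
    (τ : X → X) (hτ : MeasurePreserving τ ν ν)
    (hcont : ν {x | ContinuousAt τ x} = 1) :
    ∃ (Y : ℕ → Finset X) (T : ℕ → X → X),
      (∀ n, (Y n).Nonempty) ∧
      (∀ n, Set.BijOn (T n) ↑(Y n) ↑(Y n)) ∧
      (∀ n, ∃ x ∈ Y n, ∀ y ∈ Y n, ∃ i : ℕ, (T n)^[i] x = y) ∧
      (∀ f : X → ℝ, Continuous f →
        Tendsto (fun n => (1 / ((Y n).card : ℝ)) * ∑ y ∈ Y n, f y) atTop
          (𝓝 (∫ x, f x ∂ν))) ∧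
      (∀ ε > (0 : ℝ),
        Tendsto (fun n => (1 / ((Y n).card : ℝ)) *
            (((Y n).filter (fun y => ε < dist (T n y) (τ y))).card : ℝ))
          atTop (𝓝 0)) := by
  obtain ⟨Y, T, hY, hT, hweak, hτT⟩ :=
    exists_finite_approximation_of_dynamical_system_general hinf hτ
  refine ⟨Y, fun n => T n, hY, fun n => (hT n).1,
    fun n => (hY n).imp fun a ha => ⟨ha, fun b hb => ?_⟩,
    fun f hf => hweak (.mkOfCompact ⟨f, hf⟩), hτT⟩
  exact ((hT n).exists_pow_eq' (Y n).finite_toSet ha hb).imp fun i => (T n).iterate_eq_pow i ▸ id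
end

section
/- Let α be an irrational real number. Let (M_n) and (N_n) be sequences of positive natural numbers with gcd(N_n, M_n) = 1, M_n → ∞, and N_n/M_n → α. For each n let Y_n = {0, 1/M_n, 2/M_n, …, (M_n−1)/M_n} ⊆ [0,1) and let T_n : Y_n → Y_n be the map T_n(y) = y + N_n/M_n (mod 1). Then for every continuous function f : ℝ → ℝ that is 1-periodic, every sequence of natural numbers K_n → ∞, and every sequence of points y_n ∈ Y_n, lim_{n→∞} (1/K_n)·Σ_{j=0}^{K_n−1} f(T_nʲ(y_n)) = ∫_0^1 f(t) dt. -/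
open Filter Topology

/-!
If `g ∘ f = c • g` with `c ≠ 1`, then the Birkhoff averages of `g` at `f x` and at `x` differ by the
factor `c`, but also only by a boundary term, so those of length `n` are `O(1 / (n * ‖c - 1‖))`,
uniformly in `x`. For the rotation of the circle by `a` this applies to each nonconstant character
`χ`, with `c = χ a`, and `χ a` stays away from `1` as long as `a` is close to a fixed angle of
infinite order. Trigonometric polynomials are uniformly dense, which gives all continuous functions.
-/

open MeasureTheory

theorem birkhoffAverage_comp_of_semiconj (R : Type*) {X Y M : Type*} [DivisionSemiring R]
    [AddCommMonoid M] [Module R M] {h : X → Y} {f : X → X} {f' : Y → Y}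
    (hf : Function.Semiconj h f f') (g : Y → M) (n : ℕ) (x : X) :
    birkhoffAverage R f (g ∘ h) n x = birkhoffAverage R f' g n (h x) := by
  simp only [birkhoffAverage, birkhoffSum, Function.comp_apply, (hf.iterate_right _).eq]

theorem birkhoffAverage_apply_of_eigenfunction {R X M : Type*} [Semifield R]
    [AddCommMonoid M] [Module R M] {f : X → X} {g : X → M} {c : R}
    (h : ∀ y, g (f y) = c • g y) (n : ℕ) (x : X) :
    birkhoffAverage R f g n (f x) = c • birkhoffAverage R f g n x := by
  simp only [birkhoffAverage, birkhoffSum, ← Function.iterate_succ_apply,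
    Function.iterate_succ_apply', h, ← Finset.smul_sum, smul_comm c]

section NormedSpace

variable {X E : Type*} {𝕜 : Type*} [RCLike 𝕜] [NormedAddCommGroup E] [NormedSpace 𝕜 E]

theorem norm_birkhoffAverage_le {f : X → X} {g : X → E} {x : X} {C : ℝ}
    (hC : ∀ k, ‖g (f^[k] x)‖ ≤ C) (n : ℕ) : ‖birkhoffAverage 𝕜 f g n x‖ ≤ C := by
  rcases n.eq_zero_or_pos with rfl | hn
  · simpa using (norm_nonneg _).trans (hC 0)
  have hsum : ‖birkhoffSum f g n x‖ ≤ n * C := by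
    simpa [birkhoffSum] using norm_sum_le_of_le (Finset.range n) fun k _ ↦ hC k
  rwa [birkhoffAverage, norm_smul, norm_inv, RCLike.norm_natCast,
    inv_mul_le_iff₀ (Nat.cast_pos.mpr hn)]

theorem norm_birkhoffAverage_le_of_eigenfunction {f : X → X} {g : X → E} {c : 𝕜} (hc : c ≠ 1)
    (h : ∀ y, g (f y) = c • g y) {C : ℝ} (hC : ∀ y, ‖g y‖ ≤ C) (n : ℕ) (x : X) :
    ‖birkhoffAverage 𝕜 f g n x‖ ≤ (n : ℝ)⁻¹ * (2 * C / ‖c - 1‖) := by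
  have htelescope : (c - 1) • birkhoffAverage 𝕜 f g n x = (n : 𝕜)⁻¹ • (g (f^[n] x) - g x) := by
    rw [sub_smul, one_smul, ← birkhoffAverage_apply_of_eigenfunction h,
      birkhoffAverage_apply_sub_birkhoffAverage]
  rw [← mul_div_assoc, le_div_iff₀ (norm_pos_iff.mpr (sub_ne_zero.mpr hc))]
  calc ‖birkhoffAverage 𝕜 f g n x‖ * ‖c - 1‖
      = (n : ℝ)⁻¹ * ‖g (f^[n] x) - g x‖ := by
        rw [mul_comm, ← norm_smul, htelescope, norm_smul, norm_inv, RCLike.norm_natCast]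
    _ ≤ (n : ℝ)⁻¹ * (2 * C) := by
        gcongr
        exact (norm_sub_le_of_le (hC _) (hC _)).trans_eq (two_mul C).symm

theorem tendsto_birkhoffAverage_zero_of_eigenfunction {ι : Type*} {l : Filter ι}
    {f : ι → X → X} {g : X → E} {c : ι → 𝕜} {c₀ : 𝕜} (hc : Tendsto c l (𝓝 c₀)) (hc₀ : c₀ ≠ 1)
    (h : ∀ i y, g (f i y) = c i • g y) {C : ℝ} (hC : ∀ y, ‖g y‖ ≤ C)
    {K : ι → ℕ} (hK : Tendsto K l atTop) (x : ι → X) :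
    Tendsto (fun i ↦ birkhoffAverage 𝕜 (f i) g (K i) (x i)) l (𝓝 0) := by
  have hinv : Tendsto (fun i ↦ (K i : ℝ)⁻¹) l (𝓝 0) := tendsto_inv_atTop_nhds_zero_nat.comp hK
  have hgap : Tendsto (fun i ↦ 2 * C / ‖c i - 1‖) l (𝓝 (2 * C / ‖c₀ - 1‖)) :=
    tendsto_const_nhds.div (hc.sub_const 1).norm (norm_ne_zero_iff.mpr (sub_ne_zero.mpr hc₀))
  refine squeeze_zero_norm' ?_ (by simpa using hinv.mul hgap)
  filter_upwards [hc.eventually_ne hc₀] with i hi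
  exact norm_birkhoffAverage_le_of_eigenfunction hi (h i) hC (K i) (x i)

end NormedSpace

section WeylCriterion

variable {X E : Type*} {𝕜 : Type*} [TopologicalSpace X] [CompactSpace X] [RCLike 𝕜]
  [NormedAddCommGroup E]

theorem lipschitzWith_birkhoffAverage_continuousMap [NormedSpace 𝕜 E] (f : X → X) (n : ℕ) (x : X) :
    LipschitzWith 1 fun g : C(X, E) ↦ birkhoffAverage 𝕜 f g n x := by
  refine LipschitzWith.mk_one fun g g' ↦ ?_
  rw [dist_eq_norm, dist_eq_norm, ← Pi.sub_apply, ← Pi.sub_apply, ← birkhoffAverage_sub,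
    ← ContinuousMap.coe_sub]
  exact norm_birkhoffAverage_le (fun k ↦ (g - g').norm_coe_le_norm _) n

variable [MeasurableSpace X] [OpensMeasurableSpace X] {μ : Measure X} [IsFiniteMeasure μ]

theorem integrable_continuousMap (g : C(X, E)) : Integrable g μ :=
  g.continuous.integrable_of_hasCompactSupport (.of_compactSpace _)

theorem continuous_integral_continuousMap [NormedSpace ℝ E] :
    Continuous fun g : C(X, E) ↦ ∫ x, g x ∂μ := by
  refine (LipschitzWith.of_dist_le_mul (K := ⟨μ.real Set.univ, measureReal_nonneg⟩)
    fun g g' ↦ ?_).continuous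
  rw [dist_eq_norm, dist_eq_norm,
    ← integral_sub (integrable_continuousMap g) (integrable_continuousMap g'), mul_comm]
  exact norm_integral_le_of_norm_le_const (.of_forall (g - g').norm_coe_le_norm)

theorem tendsto_birkhoffAverage_integral_of_dense_span [NormedSpace ℝ E] [NormedSpace 𝕜 E]
    {ι : Type*} {l : Filter ι} {f : ι → X → X} {K : ι → ℕ} {x : ι → X}
    {S : Set C(X, E)} (hS : (Submodule.span 𝕜 S).topologicalClosure = ⊤)
    (h : ∀ g ∈ S, Tendsto (fun i ↦ birkhoffAverage 𝕜 (f i) g (K i) (x i)) l (𝓝 (∫ y, g y ∂μ)))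
    (g : C(X, E)) :
    Tendsto (fun i ↦ birkhoffAverage 𝕜 (f i) g (K i) (x i)) l (𝓝 (∫ y, g y ∂μ)) := by
  have hspan : ∀ g ∈ Submodule.span 𝕜 S,
      Tendsto (fun i ↦ birkhoffAverage 𝕜 (f i) g (K i) (x i)) l (𝓝 (∫ y, g y ∂μ)) := by
    intro g hg
    induction hg using Submodule.span_induction with
    | mem g hg => exact h g hg
    | zero => simpa [birkhoffAverage, birkhoffSum] using tendsto_const_nhds
    | add g g' _ _ hg hg' =>
      simpa only [ContinuousMap.coe_add, birkhoffAverage_add, Pi.add_apply,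
        integral_add (integrable_continuousMap g) (integrable_continuousMap g')] using hg.add hg'
    | smul c g _ hg =>
      simpa only [birkhoffAverage, birkhoffSum, ContinuousMap.smul_apply, ← Finset.smul_sum,
        smul_comm _ c, integral_smul] using hg.const_smul c
  have hequi : Equicontinuous fun i (g : C(X, E)) ↦ birkhoffAverage 𝕜 (f i) g (K i) (x i) :=
    (LipschitzWith.uniformEquicontinuous _ 1
      fun i ↦ lipschitzWith_birkhoffAverage_continuousMap (f i) (K i) (x i)).equicontinuous
  have hclosed := hequi.isClosed_setOfPred_tendsto (l := l)
    (continuous_integral_continuousMap (μ := μ))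
  have hg : g ∈ closure (Submodule.span 𝕜 S : Set C(X, E)) := by
    rw [← Submodule.topologicalClosure_coe, hS]
    exact Submodule.mem_top
  exact closure_minimal hspan hclosed hg

end WeylCriterion

section Circle

open AddCircle

variable {T : ℝ}

theorem fourier_apply_add (m : ℤ) (x y : AddCircle T) :
    fourier m (x + y) = fourier m x * fourier m y := by
  simp only [fourier_apply, smul_add, toCircle_add, Circle.coe_mul]

variable [hT : Fact (0 < T)]

theorem fourier_apply_eq_one_iff {m : ℤ} {x : AddCircle T} : fourier m x = 1 ↔ m • x = 0 := by
  rw [fourier_apply, Circle.coe_eq_one, ← toCircle_zero,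
    (injective_toCircle hT.out.ne').eq_iff]

theorem integral_fourier_of_ne_zero {m : ℤ} (hm : m ≠ 0) :
    ∫ t : AddCircle T, fourier m t ∂haarAddCircle = 0 := by
  simpa [fourierCoeff, Pi.single_eq_of_ne hm.symm] using
    congrFun (fourierCoeff_fourier (T := T) m) 0

variable {ι : Type*} {l : Filter ι} {a : ι → AddCircle T} {a₀ : AddCircle T} {K : ι → ℕ}

theorem tendsto_birkhoffAverage_fourier (ha : Tendsto a l (𝓝 a₀)) (ha₀ : ¬IsOfFinAddOrder a₀)
    (hK : Tendsto K l atTop) (x : ι → AddCircle T) (m : ℤ) :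
    Tendsto (fun i ↦ birkhoffAverage ℂ (· + a i) (fourier m) (K i) (x i)) l
      (𝓝 (∫ t : AddCircle T, fourier m t ∂haarAddCircle)) := by
  rcases eq_or_ne m 0 with rfl | hm
  · refine tendsto_const_nhds.congr' ?_
    filter_upwards [hK.eventually_ne_atTop 0] with i hi
    rw [birkhoffAverage_of_comp_eq ℂ (by ext; simp) (Nat.cast_ne_zero.mpr hi)]
    simp
  have hchar : (fourier m a₀ : ℂ) ≠ 1 := fun h ↦
    ha₀ (isOfFinAddOrder_iff_zsmul_eq_zero.mpr ⟨m, hm, fourier_apply_eq_one_iff.mp h⟩)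
  rw [integral_fourier_of_ne_zero hm]
  exact tendsto_birkhoffAverage_zero_of_eigenfunction
    (((fourier m).continuous.tendsto a₀).comp ha) hchar
    (fun i y ↦ (fourier_apply_add m y (a i)).trans (mul_comm _ _))
    (fun y ↦ (Circle.norm_coe _).le) hK x

theorem tendsto_birkhoffAverage_add_right_complex (ha : Tendsto a l (𝓝 a₀))
    (ha₀ : ¬IsOfFinAddOrder a₀) (hK : Tendsto K l atTop) (x : ι → AddCircle T)
    (F : C(AddCircle T, ℂ)) :
    Tendsto (fun i ↦ birkhoffAverage ℂ (· + a i) F (K i) (x i)) l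
      (𝓝 (∫ t, F t ∂haarAddCircle)) :=
  tendsto_birkhoffAverage_integral_of_dense_span span_fourier_closure_eq_top
    (Set.forall_mem_range.mpr (tendsto_birkhoffAverage_fourier ha ha₀ hK x)) F

theorem tendsto_birkhoffAverage_add_right {𝕜 : Type*} [RCLike 𝕜] (ha : Tendsto a l (𝓝 a₀))
    (ha₀ : ¬IsOfFinAddOrder a₀) (hK : Tendsto K l atTop) (x : ι → AddCircle T)
    (F : C(AddCircle T, 𝕜)) :
    Tendsto (fun i ↦ birkhoffAverage 𝕜 (· + a i) F (K i) (x i)) l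
      (𝓝 (∫ t, F t ∂haarAddCircle)) := by
  let G : C(AddCircle T, ℂ) := (RCLike.map 𝕜 ℂ : C(𝕜, ℂ)).comp F
  have hG : RCLike.map ℂ 𝕜 ∘ G = F := by
    ext t
    simp [G]
  have hintegral : RCLike.map ℂ 𝕜 (∫ t, G t ∂haarAddCircle) = ∫ t, F t ∂haarAddCircle := by
    rw [← ContinuousLinearMap.integral_comp_comm _ (integrable_continuousMap G), ← hG]
    rfl
  have hcomplex := ((RCLike.map ℂ 𝕜).continuous.tendsto _).comp
    (tendsto_birkhoffAverage_add_right_complex ha ha₀ hK x G)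
  rw [hintegral] at hcomplex
  refine hcomplex.congr fun i ↦ ?_
  rw [Function.comp_apply, map_birkhoffAverage ℂ 𝕜, hG]

end Circle

theorem semiconj_coe_fract_add (a : ℝ) :
    Function.Semiconj ((↑) : ℝ → UnitAddCircle) (fun t ↦ Int.fract (t + a))
      (· + (a : UnitAddCircle)) :=
  fun t ↦ by rw [AddCircle.coe_fract, AddCircle.coe_add]

theorem not_isOfFinAddOrder_coe_of_irrational {α : ℝ} (hα : Irrational α) :
    ¬IsOfFinAddOrder (α : UnitAddCircle) :=
  AddCircle.not_isOfFinAddOrder_iff_forall_rat_ne_div.mpr fun q h ↦ hα ⟨q, by simpa using h⟩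

theorem irrational_rotation_finite_approximation_general {ι : Type*} {l : Filter ι}
    {𝕜 : Type*} [RCLike 𝕜] {α : ℝ} (hα : Irrational α) {a : ι → ℝ} (ha : Tendsto a l (𝓝 α))
    {f : ℝ → 𝕜} (hf : Continuous f) (hper : Function.Periodic f 1)
    {K : ι → ℕ} (hK : Tendsto K l atTop) (y : ι → ℝ) :
    Tendsto (fun i ↦ birkhoffAverage 𝕜 (fun t ↦ Int.fract (t + a i)) f (K i) (y i)) l
      (𝓝 (∫ t in (0 : ℝ)..1, f t)) := by
  let F : C(UnitAddCircle, 𝕜) := ⟨hper.lift, hf.quotient_liftOn' _⟩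
  have hF : F ∘ ((↑) : ℝ → UnitAddCircle) = f := funext hper.lift_coe
  have hintegral : ∫ t, F t ∂AddCircle.haarAddCircle = ∫ t in (0 : ℝ)..1, f t := by
    rw [AddCircle.integral_haarAddCircle, inv_one, one_smul,
      ← UnitAddCircle.intervalIntegral_preimage 0, zero_add, ← hF]
    rfl
  have hcircle := tendsto_birkhoffAverage_add_right
    (((AddCircle.continuous_mk' 1).tendsto α).comp ha)
    (not_isOfFinAddOrder_coe_of_irrational hα) hK (fun i ↦ (y i : UnitAddCircle)) F
  rw [hintegral] at hcircle
  refine hcircle.congr fun i ↦ ?_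
  rw [← hF, birkhoffAverage_comp_of_semiconj 𝕜 (semiconj_coe_fract_add (a i))]
  rfl

/-- Finite approximations of an irrational rotation: let `α` be irrational and let
`M n → ∞`, `N n` be positive naturals with `gcd (N n) (M n) = 1` and `N n / M n → α`.
On the grid `{k / M n : 0 ≤ k < M n} ⊆ [0,1)` consider the map
`T n y = y + N n / M n (mod 1)`. Then for every continuous `1`-periodic `f : ℝ → ℝ`,
every sequence `K n → ∞`, and every sequence of grid points `k n / M n` (with
`k n < M n`), the ergodic averages converge to `∫₀¹ f`. -/
theorem irrational_rotation_finite_approximation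
    (α : ℝ) (hα : Irrational α)
    (M N : ℕ → ℕ) (hMpos : ∀ n, 1 ≤ M n) (hNpos : ∀ n, 1 ≤ N n)
    (hgcd : ∀ n, Nat.gcd (N n) (M n) = 1)
    (hMtop : Tendsto M atTop atTop)
    (hNM : Tendsto (fun n => (N n : ℝ) / (M n : ℝ)) atTop (𝓝 α))
    (f : ℝ → ℝ) (hf : Continuous f) (hper : ∀ t : ℝ, f (t + 1) = f t)
    (K : ℕ → ℕ) (hK : Tendsto K atTop atTop)
    (k : ℕ → ℕ) (hk : ∀ n, k n < M n) :
    Tendsto (fun n => (1 / (K n : ℝ)) * ∑ j ∈ Finset.range (K n),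
        f ((fun y => Int.fract (y + (N n : ℝ) / (M n : ℝ)))^[j] ((k n : ℝ) / (M n : ℝ))))
      atTop (𝓝 (∫ t in (0:ℝ)..1, f t)) := by
  simpa only [birkhoffAverage, birkhoffSum, smul_eq_mul, one_div] using
    irrational_rotation_finite_approximation_general hα hNM hf hper hK (fun n ↦ k n / M n)
end

section
/- For M ≥ 1 let Y_M = {0, 1, …, M−1}, let T_M(k) = k + 1 (mod M), and let F_M(k) = k/M. For a ∈ (0,1] define ψ_a : [0,1] → ℝ by ψ_a(t) = t + a/2 for 0 ≤ t ≤ 1−a, and ψ_a(t) = t + a/2 − 1 + (1−t)/a for 1−a < t ≤ 1. Then for all sequences M_n → ∞, K_n ≥ 1, and k_n with 0 ≤ k_n < M_n, such that K_n/M_n → a ∈ (0,1] and k_n/M_n → t ∈ [0,1], one has lim_{n→∞} (1/K_n)·Σ_{j=0}^{K_n−1} ((k_n + j) mod M_n)/M_n = ψ_a(t). -/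
/-!
Since `(i % M) / M` is the fractional part of `i / M` and `Int.fract` is linear with slope one on
`[i / M, (i + 1) / M)`, the integral of `Int.fract` over that cell exceeds `((i % M) / M) / M` by
exactly `1 / (2 M²)`. Hence the ergodic average is, up to the error `1 / (2 M)`, the mean of
`Int.fract` over `[k / M, (k + K) / M]`, and it converges to the mean over `[t, t + a]`, which is
`ψ_a(t)`.
-/

open Filter Topology

/-- The limit profile `ψ_a(t)` of ergodic averages for the cyclic shift and `F(k) = k/M`:
`ψ_a(t) = t + a/2` for `0 ≤ t ≤ 1 − a` and `ψ_a(t) = t + a/2 − 1 + (1−t)/a` for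
`1 − a < t ≤ 1`. -/
noncomputable def psi (a t : ℝ) : ℝ :=
  if t ≤ 1 - a then t + a / 2 else t + a / 2 - 1 + (1 - t) / a

open MeasureTheory

theorem tendsto_intervalAverage {ι E : Type*} [NormedAddCommGroup E] [NormedSpace ℝ E]
    {f : ℝ → E} (hf : ∀ a b, IntervalIntegrable f volume a b) {l : Filter ι} {u v : ι → ℝ}
    {a b : ℝ} (hab : a ≠ b) (hu : Tendsto u l (𝓝 a)) (hv : Tendsto v l (𝓝 b)) :
    Tendsto (fun n => ⨍ x in u n..v n, f x) l (𝓝 (⨍ x in a..b, f x)) := by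
  have hprim := intervalIntegral.continuous_primitive hf 0
  have hint : Tendsto (fun n => ∫ x in u n..v n, f x) l (𝓝 (∫ x in a..b, f x)) := by
    simpa only [Function.comp_def, intervalIntegral.integral_interval_sub_left (hf 0 _) (hf 0 _)]
      using ((hprim.tendsto b).comp hv).sub ((hprim.tendsto a).comp hu)
  simpa only [interval_average_eq] using
    ((hv.sub hu).inv₀ (sub_ne_zero.mpr hab.symm)).smul hint

theorem intervalIntegrable_fract (a b : ℝ) : IntervalIntegrable Int.fract volume a b := by
  refine (intervalIntegrable_const (c := (1 : ℝ))).mono_fun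
    measurable_fract.aestronglyMeasurable (.of_forall fun x => ?_)
  simpa [abs_of_nonneg (Int.fract_nonneg x)] using (Int.fract_lt_one x).le

theorem integral_fract_of_mem_Icc {n : ℤ} {u v : ℝ} (hu : u ∈ Set.Icc (n : ℝ) (n + 1))
    (hv : v ∈ Set.Icc (n : ℝ) (n + 1)) :
    ∫ x in u..v, Int.fract x = ((v - n) ^ 2 - (u - n) ^ 2) / 2 := by
  have hfract : Set.EqOn Int.fract (fun x : ℝ => x - n) (Set.uIoo u v) := fun x hx => by
    have hn : ⌊x⌋ = n := Int.floor_eq_iff.mpr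
      ⟨(le_min hu.1 hv.1).trans hx.1.le, hx.2.trans_le (max_le hu.2 hv.2)⟩
    rw [Int.fract, hn]
  rw [intervalIntegral.integral_congr_uIoo hfract,
    intervalIntegral.integral_comp_sub_right (fun x => x), integral_id]

theorem integral_fract_div_natCast {M : ℕ} (hM : M ≠ 0) (i : ℕ) :
    ∫ x in (i / M : ℝ)..((i + 1 : ℕ) / M : ℝ), Int.fract x =
      ((i % M : ℕ) / M + 1 / (2 * M) : ℝ) / M := by
  have hM' : (0 : ℝ) < M := by positivity
  have hi : (i : ℝ) = M * (i / M : ℕ) + (i % M : ℕ) := by exact_mod_cast (Nat.div_add_mod i M).symm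
  have hlt : ((i % M : ℕ) : ℝ) + 1 ≤ M := by exact_mod_cast Nat.mod_lt i (Nat.pos_of_ne_zero hM)
  have hleft : (i / M : ℝ) ∈ Set.Icc (((i / M : ℕ) : ℤ) : ℝ) (((i / M : ℕ) : ℤ) + 1) := by
    rw [Int.cast_natCast, Set.mem_Icc, le_div_iff₀ hM', div_le_iff₀ hM']
    constructor <;> linarith
  have hright : ((i + 1 : ℕ) / M : ℝ) ∈
      Set.Icc (((i / M : ℕ) : ℤ) : ℝ) (((i / M : ℕ) : ℤ) + 1) := by
    rw [Int.cast_natCast, Set.mem_Icc, le_div_iff₀ hM', div_le_iff₀ hM', Nat.cast_succ]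
    constructor <;> linarith
  rw [integral_fract_of_mem_Icc hleft hright, Int.cast_natCast, Nat.cast_succ, hi]
  field_simp
  ring

theorem cyclic_average_eq_intervalAverage_fract {M K : ℕ} (hM : M ≠ 0) (hK : K ≠ 0) (k : ℕ) :
    (1 / (K : ℝ)) * ∑ j ∈ Finset.range K, (((k + j) % M : ℕ) : ℝ) / (M : ℝ) =
      (⨍ x in (k / M : ℝ)..(k / M + K / M : ℝ), Int.fract x) - 1 / (2 * M) := by
  have hM' : (M : ℝ) ≠ 0 := Nat.cast_ne_zero.mpr hM
  have hK' : (K : ℝ) ≠ 0 := Nat.cast_ne_zero.mpr hK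
  have hint : ∫ x in (k / M : ℝ)..(k / M + K / M : ℝ), Int.fract x =
      (∑ j ∈ Finset.range K, (((k + j) % M : ℕ) : ℝ) / M + K * (1 / (2 * M))) / M := by
    calc ∫ x in (k / M : ℝ)..(k / M + K / M : ℝ), Int.fract x
      _ = ∑ j ∈ Finset.range K,
          ∫ x in ((k + j : ℕ) / M : ℝ)..((k + (j + 1) : ℕ) / M : ℝ), Int.fract x := by
        rw [intervalIntegral.sum_integral_adjacent_intervals (a := fun j => ((k + j : ℕ) / M : ℝ))
          fun _ _ => intervalIntegrable_fract _ _]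
        simp only [add_zero, Nat.cast_add, add_div]
      _ = ∑ j ∈ Finset.range K, ((((k + j) % M : ℕ) : ℝ) / M + 1 / (2 * M)) / M :=
        Finset.sum_congr rfl fun j _ => integral_fract_div_natCast hM (k + j)
      _ = _ := by
        rw [← Finset.sum_div, Finset.sum_add_distrib, Finset.sum_const, Finset.card_range,
          nsmul_eq_mul]
  rw [interval_average_eq_div, hint, add_sub_cancel_left]
  field_simp
  ring

theorem psi_eq_intervalAverage_fract {a t : ℝ} (ha0 : 0 < a) (ha1 : a ≤ 1) (ht0 : 0 ≤ t)
    (ht1 : t ≤ 1) : psi a t = ⨍ x in t..t + a, Int.fract x := by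
  have ht : t ∈ Set.Icc ((0 : ℤ) : ℝ) ((0 : ℤ) + 1) := by simp [ht0, ht1]
  rw [interval_average_eq_div, add_sub_cancel_left, psi]
  split_ifs with h
  · rw [integral_fract_of_mem_Icc ht (by constructor <;> push_cast <;> linarith)]
    field_simp
    push_cast
    ring
  · rw [← intervalIntegral.integral_add_adjacent_intervals (intervalIntegrable_fract t 1)
        (intervalIntegrable_fract 1 (t + a)),
      integral_fract_of_mem_Icc ht (by simp),
      integral_fract_of_mem_Icc (n := 1) (by simp) (by constructor <;> push_cast <;> linarith)]
    field_simp
    push_cast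
    ring

theorem cyclic_shift_average_limit_general {ι : Type*} {l : Filter ι} {M K k : ι → ℕ} {a t : ℝ}
    (hM : Tendsto M l atTop)
    (ha : Tendsto (fun n => (K n : ℝ) / (M n : ℝ)) l (𝓝 a)) (ha0 : a ≠ 0)
    (ht : Tendsto (fun n => (k n : ℝ) / (M n : ℝ)) l (𝓝 t)) :
    Tendsto (fun n => (1 / (K n : ℝ)) * ∑ j ∈ Finset.range (K n),
        (((k n + j) % M n : ℕ) : ℝ) / (M n : ℝ))
      l (𝓝 (⨍ x in t..t + a, Int.fract x)) := by
  have hmean := tendsto_intervalAverage intervalIntegrable_fract (left_ne_add.mpr ha0) ht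
    (ht.add ha)
  have herror : Tendsto (fun n => 1 / (2 * (M n : ℝ))) l (𝓝 0) :=
    tendsto_const_nhds.div_atTop
      ((tendsto_natCast_atTop_atTop.comp hM).const_mul_atTop two_pos)
  rw [← sub_zero (⨍ x in t..t + a, Int.fract x)]
  refine (hmean.sub herror).congr' ?_
  filter_upwards [ha.eventually_ne ha0] with n hn
  obtain ⟨hK0, hM0⟩ := div_ne_zero_iff.mp hn
  exact (cyclic_average_eq_intervalAverage_fract (Nat.cast_ne_zero.mp hM0)
    (Nat.cast_ne_zero.mp hK0) (k n)).symm

/-- For the cyclic shift `T(k) = k + 1 (mod M)` on `{0, …, M−1}` and `F(k) = k/M`: for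
sequences `M n → ∞`, `K n ≥ 1`, `k n < M n` with `K n / M n → a ∈ (0,1]` and
`k n / M n → t ∈ [0,1]`, the ergodic averages
`(1/K n)·∑_{j<K n} ((k n + j) mod M n)/M n` converge to `ψ_a(t)`. -/
theorem cyclic_shift_average_limit
    (M K k : ℕ → ℕ) (a t : ℝ)
    (hMtop : Tendsto M atTop atTop)
    (hK1 : ∀ n, 1 ≤ K n) (hk : ∀ n, k n < M n)
    (ha : Tendsto (fun n => (K n : ℝ) / (M n : ℝ)) atTop (𝓝 a))
    (ha0 : 0 < a) (ha1 : a ≤ 1)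
    (ht : Tendsto (fun n => (k n : ℝ) / (M n : ℝ)) atTop (𝓝 t))
    (ht0 : 0 ≤ t) (ht1 : t ≤ 1) :
    Tendsto (fun n => (1 / (K n : ℝ)) * ∑ j ∈ Finset.range (K n),
        (((k n + j) % M n : ℕ) : ℝ) / (M n : ℝ))
      atTop (𝓝 (psi a t)) := by
  rw [psi_eq_intervalAverage_fract ha0 ha1 ht0 ht1]
  exact cyclic_shift_average_limit_general hMtop ha ha0.ne' ht
end
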